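/- Let T be a tiling of ℝ^d such that 𝒫(T) is admissible and linearly repetitive, let R ≥ 0, and suppose that for each tiling S ∈ Ω(𝒫(T)) a function A(S) : S × S → ℝ is given satisfying: (symmetry) A(S)(x,y) = A(S)(y,x); (finite range) A(S)(x,y) = 0 whenever dist(x,y) ≥ R; and (invariance) whenever S, S' ∈ Ω(𝒫(T)), x,y ∈ S, and t ∈ ℝ^d are such that x+t, y+t ∈ S' and the translate by t of the pattern {s ∈ S : dist(s,{x,y}) ≤ R} equals {s' ∈ S' : dist(s',{x+t,y+t}) ≤ R}, one has A(S')(x+t,y+t) = A(S)(x,y). Then for every λ ∈ ℝ there exists k(λ) ∈ ℝ such that k_λ^S(B) → k(λ) as ω(B) → ∞, uniformly in S: for every ε > 0 there is r' > 0 such that |k_λ^S(B) − k(λ)| < ε for every tiling S ∈ Ω(𝒫(T)) and every box B with ω(B) ≥ r'. -/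

import Mathlib

/-!
The unnormalized eigenvalue count of a box is almost additive: deleting rows and columns of a
symmetric matrix changes the count by at most their number, tiles deep inside different cells of a
subdivision do not interact because of the finite range, and the remaining tiles lie near the
boundaries of the cells, so their number is negligible relative to the volume of the box.

Let `k` be the infimum of the numbers that bound the density of the counts on all sufficiently
wide boxes from above, so that these densities are eventually at most `k + ε`. For the lower
bound, linear repetitivity makes each patch of size `L` recur in every cube of side `K L`, with
`K` independent of `L`. If a large cube had density noticeably below `k`, then by invariance
copies of it would fill a fixed proportion of every wide box, and the densities would be bounded
by a number less than `k`.
-/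

open Metric Set Filter MeasureTheory Topology

noncomputable section

/-- Points of `ℝ^d`. -/
abbrev Pt (d : ℕ) := EuclideanSpace ℝ (Fin d)

variable (d : ℕ)

/-- A tile: a subset of `ℝ^d` homeomorphic to the closed unit ball. -/
def IsTile (m : Set (Pt d)) : Prop :=
  Nonempty (m ≃ₜ (Metric.closedBall (0 : Pt d) 1))

/-- A pattern: a finite nonempty collection of tiles whose interiors are pairwise disjoint. -/
def IsPattern (M : Set (Set (Pt d))) : Prop :=
  M.Finite ∧ M.Nonempty ∧ (∀ m ∈ M, IsTile d m) ∧
    M.Pairwise fun m m' => interior m ∩ interior m' = ∅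

/-- A tiling of `ℝ^d`: a collection of tiles with pairwise disjoint interiors covering `ℝ^d`. -/
def IsTiling (T : Set (Set (Pt d))) : Prop :=
  (∀ m ∈ T, IsTile d m) ∧
    (T.Pairwise fun m m' => interior m ∩ interior m' = ∅) ∧ ⋃₀ T = Set.univ

/-- Translation of a pattern by `t`. -/
def patTrans (t : Pt d) (M : Set (Set (Pt d))) : Set (Set (Pt d)) :=
  (fun m => (fun x => x + t) '' m) '' M

/-- Support (underlying set) of a pattern. -/
def supp (M : Set (Set (Pt d))) : Set (Pt d) := ⋃₀ M

/-- Inner radius: the largest `r` such that some closed ball of radius `r` fits inside `s(M)`. -/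
def rIn (M : Set (Set (Pt d))) : ℝ :=
  sSup {r : ℝ | ∃ x : Pt d, Metric.closedBall x r ⊆ supp d M}

/-- Outer radius: the smallest `r` such that some closed ball of radius `r` contains `s(M)`. -/
def rOut (M : Set (Set (Pt d))) : ℝ :=
  sInf {r : ℝ | ∃ x : Pt d, supp d M ⊆ Metric.closedBall x r}

/-- The pattern class of `P` is a subpattern of (the class of) `Q`:
some translate of `P` is contained in `Q`. -/
def SubpatternClass (P Q : Set (Set (Pt d))) : Prop :=
  ∃ t : Pt d, patTrans d t P ⊆ Q

/-- A set of abstract patterns is modelled as a translation-closed set `Ps` of concrete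
patterns (the union of the pattern classes).  `Admissible` encodes conditions
(i)–(iii) of Definition 2.1. -/
structure Admissible (Ps : Set (Set (Set (Pt d)))) : Prop where
  pattern : ∀ P ∈ Ps, IsPattern d P
  transClosed : ∀ (t : Pt d), ∀ P ∈ Ps, patTrans d t P ∈ Ps
  subClosed : ∀ P ∈ Ps, ∀ Q : Set (Set (Pt d)), IsPattern d Q → Q ⊆ P → Q ∈ Ps
  tileBounds : ∃ rmin rmax : ℝ, 0 < rmin ∧ rmin ≤ rmax ∧
    ∀ m : Set (Pt d), ({m} : Set (Set (Pt d))) ∈ Ps →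
      rmin ≤ rIn d {m} ∧ rIn d {m} ≤ rOut d {m} ∧ rOut d {m} ≤ rmax
  extend : ∀ P ∈ Ps, (0 : Pt d) ∈ supp d P → ∀ r : ℝ, 0 < r →
    ∃ Q ∈ Ps, P ⊆ Q ∧ Metric.closedBall (0 : Pt d) r ⊆ supp d Q

/-- Linear repetitivity of a (translation-closed) set of patterns. -/
def LinearlyRepetitive (Ps : Set (Set (Set (Pt d)))) : Prop :=
  ∃ c : ℝ, 0 < c ∧ ∀ P ∈ Ps, 1 ≤ rOut d P →
    ∀ Q ∈ Ps, c * rOut d P ≤ rIn d Q → SubpatternClass d P Q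

/-- The box determined by corner functions `a b : Fin d → ℝ`. -/
def boxSet (a b : Fin d → ℝ) : Set (Pt d) := {x | ∀ j, x j ∈ Set.Icc (a j) (b j)}

/-- `B` is a box. -/
def IsBox (B : Set (Pt d)) : Prop :=
  ∃ a b : Fin d → ℝ, (∀ j, a j < b j) ∧ B = boxSet d a b

/-- `B` is an `r`-box: all side lengths lie in `[r, 2r]`. -/
def IsRBox (r : ℝ) (B : Set (Pt d)) : Prop :=
  ∃ a b : Fin d → ℝ, (∀ j, a j < b j) ∧ B = boxSet d a b ∧
    ∀ j, r ≤ b j - a j ∧ b j - a j ≤ 2 * r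

/-- Width of a box: the minimum of its side lengths. -/
def widthOf (B : Set (Pt d)) : ℝ :=
  ⨅ j : Fin d, (sSup ((fun x : Pt d => x j) '' B) - sInf ((fun x : Pt d => x j) '' B))

/-- Volume of a subset of `ℝ^d`. -/
def volOf (B : Set (Pt d)) : ℝ := (volume B).toReal

/-- Restriction `M ∩ B` of a pattern or tiling `M` to `B`. -/
def patRestrict (M : Set (Set (Pt d))) (B : Set (Pt d)) : Set (Set (Pt d)) :=
  {s | ∃ m ∈ M, (m ∩ interior B).Nonempty ∧ s = m ∩ B}

/-- The set `Ps_B` of box-patterns derived from `Ps` (concrete representatives). -/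
def BoxPatterns (Ps : Set (Set (Set (Pt d)))) : Set (Set (Set (Pt d))) :=
  {Q | ∃ P ∈ Ps, ∃ B : Set (Pt d), IsBox d B ∧ B ⊆ supp d P ∧ Q = patRestrict d P B}

/-- The set `Ps(r)` of `r`-patterns derived from `Ps`. -/
def RPatterns (Ps : Set (Set (Set (Pt d)))) (r : ℝ) : Set (Set (Set (Pt d))) :=
  {Q | ∃ P ∈ Ps, ∃ B : Set (Pt d), IsRBox d r B ∧ B ⊆ supp d P ∧ Q = patRestrict d P B}

/-- Width of a box-pattern. -/
def patWidth (M : Set (Set (Pt d))) : ℝ := widthOf d (supp d M)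

/-- Volume of a box-pattern. -/
def patVol (M : Set (Set (Pt d))) : ℝ := volOf d (supp d M)

/-- A subadditive function on `Ps_B`, with constants `dF, rF` and error function `cF`.
`F` is defined on concrete patterns and is translation-invariant (i.e. well defined on
pattern classes). -/
structure SubadditiveOn (Ps : Set (Set (Set (Pt d)))) (F : Set (Set (Pt d)) → ℝ)
    (dF rF : ℝ) (cF : ℝ → ℝ) : Prop where
  invariant : ∀ (t : Pt d), ∀ M ∈ BoxPatterns d Ps, F (patTrans d t M) = F M
  dF_nonneg : 0 ≤ dF
  rF_nonneg : 0 ≤ rF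
  cF_anti : ∀ r s : ℝ, rF ≤ r → r ≤ s → cF s ≤ cF r
  cF_lim : Tendsto cF atTop (nhds 0)
  subadd : ∀ M ∈ BoxPatterns d Ps, ∀ (n : ℕ) (Bj : Fin n → Set (Pt d)),
    (∀ j, IsBox d (Bj j)) →
    (∀ i j, i ≠ j → interior (Bj i) ∩ interior (Bj j) = ∅) →
    (⋃ j, Bj j) = supp d M →
    (∀ j, rF ≤ widthOf d (Bj j)) →
    F M ≤ (∑ j, F (patRestrict d M (Bj j))) +
      ∑ j, cF (widthOf d (Bj j)) * volOf d (Bj j)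
  bound : ∀ M ∈ BoxPatterns d Ps, |F M| ≤ dF * patVol d M

/-- The upper mean `F⁺(r)`. -/
def Fplus (Ps : Set (Set (Set (Pt d)))) (F : Set (Set (Pt d)) → ℝ) (r : ℝ) : ℝ :=
  sSup ((fun P => F P / patVol d P) '' RPatterns d Ps r)

/-- The lower mean `F⁻(r)`. -/
def Fminus (Ps : Set (Set (Set (Pt d)))) (F : Set (Set (Pt d)) → ℝ) (r : ℝ) : ℝ :=
  sInf ((fun P => F P / patVol d P) '' RPatterns d Ps r)


/-- The set of pattern classes of finite subpatterns of a tiling `T`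
(as a translation-closed set of concrete patterns). -/
def patternClassesOf (T : Set (Set (Pt d))) : Set (Set (Set (Pt d))) :=
  {M | IsPattern d M ∧ ∃ t : Pt d, patTrans d t M ⊆ T}

/-- The tiling space `Ω(𝒫)`: all tilings all of whose finite subpattern classes lie in `Ps`. -/
def TilingsOf (Ps : Set (Set (Set (Pt d)))) : Set (Set (Set (Pt d))) :=
  {T | IsTiling d T ∧ ∀ M : Set (Set (Pt d)), IsPattern d M → M ⊆ T → M ∈ Ps}

/-- The tiles of `S` meeting the interior of `B`. -/
def tilesMeeting (S : Set (Set (Pt d))) (B : Set (Pt d)) : Set (Set (Pt d)) :=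
  {x | x ∈ S ∧ (x ∩ interior B).Nonempty}

/-- The pattern of tiles of `S` within distance `R` of the pair of tiles `x, y`. -/
def nbhdPattern (S : Set (Set (Pt d))) (x y : Set (Pt d)) (R : ℝ) :
    Set (Set (Pt d)) :=
  {s | s ∈ S ∧ ∃ p ∈ s, ∃ q ∈ x ∪ y, dist p q ≤ R}

/-- The number of eigenvalues `≤ lam` (with multiplicity) of a real symmetric matrix. -/
noncomputable def evCountBelow {n : Type} [Fintype n] [DecidableEq n]
    (M : Matrix n n ℝ) (lam : ℝ) : ℕ :=
  if h : M.IsHermitian then Fintype.card {i // h.eigenvalues i ≤ lam} else 0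

/-- The finite-volume eigenvalue counting function
`k_λ^S(B) = #{eigenvalues of A(S)|_B that are ≤ λ} / |B|`, where `A(S)|_B` is the matrix
of `A(S)` restricted to the tiles of `S` meeting the interior of `B`.  (For the operators
considered here this set of tiles is finite, so the `dite` takes its first branch.) -/
noncomputable def idsVal (S : Set (Set (Pt d)))
    (A : Set (Set (Pt d)) → Set (Pt d) → Set (Pt d) → ℝ)
    (B : Set (Pt d)) (lam : ℝ) : ℝ :=
  haveI := Classical.propDecidable ((tilesMeeting d S B).Finite)
  if h : (tilesMeeting d S B).Finite then
    haveI := h.fintype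
    haveI : DecidableEq (tilesMeeting d S B) := Classical.decEq _
    ((evCountBelow (Matrix.of fun x y : tilesMeeting d S B => A S x.1 y.1) lam : ℕ) : ℝ) /
      volOf d B
  else 0

section EigenvalueCounting

open Matrix

variable {n m : Type} [Fintype n] [Fintype m] {M : Matrix n n ℝ} {lam : ℝ}

lemma dotProduct_comp_of_support_subset {e : m → n} (he : Function.Injective e) {v w : n → ℝ}
    (hv : ∀ j ∉ range e, v j = 0) : (v ∘ e) ⬝ᵥ (w ∘ e) = v ⬝ᵥ w :=
  Fintype.sum_of_injective e he _ _ (fun j hj => by rw [hv j hj, zero_mul]) fun _ => rfl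

lemma submatrix_mulVec_comp (M : Matrix n n ℝ) {e : m → n} (he : Function.Injective e)
    {v : n → ℝ} (hv : ∀ j ∉ range e, v j = 0) :
    M.submatrix e e *ᵥ (v ∘ e) = (M *ᵥ v) ∘ e := by
  ext i
  rw [Function.comp_apply, mulVec, mulVec, dotProduct_comm _ v,
    ← dotProduct_comp_of_support_subset he hv, dotProduct_comm]
  rfl

lemma submatrix_quadForm_le_iff {e : m → n} (he : Function.Injective e) {v : n → ℝ}
    (hv : ∀ j ∉ range e, v j = 0) :
    (v ∘ e) ⬝ᵥ (M.submatrix e e *ᵥ (v ∘ e)) ≤ lam * ((v ∘ e) ⬝ᵥ (v ∘ e)) ↔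
      v ⬝ᵥ (M *ᵥ v) ≤ lam * (v ⬝ᵥ v) := by
  rw [submatrix_mulVec_comp M he hv, dotProduct_comp_of_support_subset he hv,
    dotProduct_comp_of_support_subset he hv]

variable [DecidableEq n] [DecidableEq m]

/-- The coordinates of a vector in an orthonormal eigenbasis of the symmetric matrix `M`. -/
def eigenCoords (h : M.IsHermitian) : (n → ℝ) ≃ₗ[ℝ] (n → ℝ) :=
  (WithLp.linearEquiv 2 ℝ (n → ℝ)).symm ≪≫ₗ h.eigenvectorBasis.repr.toLinearEquiv ≪≫ₗ
    WithLp.linearEquiv 2 ℝ (n → ℝ)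

lemma eigenCoords_apply (h : M.IsHermitian) (v : n → ℝ) (i : n) :
    eigenCoords h v i = (h.eigenvectorBasis i).ofLp ⬝ᵥ v := by
  simp [eigenCoords, OrthonormalBasis.repr_apply_apply, EuclideanSpace.inner_eq_star_dotProduct,
    dotProduct_comm]

lemma eigenCoords_dotProduct (h : M.IsHermitian) (v w : n → ℝ) :
    eigenCoords h v ⬝ᵥ eigenCoords h w = v ⬝ᵥ w := by
  have := h.eigenvectorBasis.repr.inner_map_map (WithLp.toLp 2 w) (WithLp.toLp 2 v)
  simp only [EuclideanSpace.inner_eq_star_dotProduct, star_trivial] at this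
  exact this

lemma eigenCoords_mulVec (h : M.IsHermitian) (v : n → ℝ) (i : n) :
    eigenCoords h (M *ᵥ v) i = h.eigenvalues i * eigenCoords h v i := by
  have hM : Mᵀ = M := h
  rw [eigenCoords_apply, eigenCoords_apply, dotProduct_mulVec, ← mulVec_transpose, hM,
    h.mulVec_eigenvectorBasis, smul_dotProduct, smul_eq_mul]

lemma mul_sub_quadForm_eq_sum (h : M.IsHermitian) (lam : ℝ) (v : n → ℝ) :
    lam * (v ⬝ᵥ v) - v ⬝ᵥ (M *ᵥ v) = ∑ i, (lam - h.eigenvalues i) * eigenCoords h v i ^ 2 := by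
  rw [← eigenCoords_dotProduct h, ← eigenCoords_dotProduct h v (M *ᵥ v)]
  simp only [dotProduct, eigenCoords_mulVec, Finset.mul_sum, ← Finset.sum_sub_distrib]
  exact Finset.sum_congr rfl fun i _ => by ring

lemma evCountBelow_eq_card (h : M.IsHermitian) (lam : ℝ) :
    evCountBelow M lam = Fintype.card {i // h.eigenvalues i ≤ lam} := by
  rw [evCountBelow, dif_pos h]

lemma finrank_le_evCountBelow (h : M.IsHermitian) {V : Type*} [AddCommGroup V] [Module ℝ V]
    (f : V →ₗ[ℝ] n → ℝ) (hf : Function.Injective f)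
    (hV : ∀ v, f v ⬝ᵥ (M *ᵥ f v) ≤ lam * (f v ⬝ᵥ f v)) :
    Module.finrank ℝ V ≤ evCountBelow M lam := by
  let lowCoords : V →ₗ[ℝ] ({i // h.eigenvalues i ≤ lam} → ℝ) :=
    LinearMap.funLeft ℝ ℝ Subtype.val ∘ₗ (eigenCoords h).toLinearMap ∘ₗ f
  have hinj : Function.Injective lowCoords := by
    refine (injective_iff_map_eq_zero lowCoords).2 fun v hv => hf ?_
    have hlow : ∀ i, h.eigenvalues i ≤ lam → eigenCoords h (f v) i = 0 :=
      fun i hi => congrFun hv ⟨i, hi⟩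
    have hterm : ∀ i ∈ Finset.univ, (lam - h.eigenvalues i) * eigenCoords h (f v) i ^ 2 ≤ 0 := by
      intro i _
      rcases le_or_gt (h.eigenvalues i) lam with hi | hi
      · simp [hlow i hi]
      · exact mul_nonpos_of_nonpos_of_nonneg (by linarith) (sq_nonneg _)
    have hsum : ∑ i, (lam - h.eigenvalues i) * eigenCoords h (f v) i ^ 2 = 0 :=
      le_antisymm (Finset.sum_nonpos hterm)
        (by rw [← mul_sub_quadForm_eq_sum]; exact sub_nonneg.2 (hV v))
    have hzero : eigenCoords h (f v) = 0 := by
      ext i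
      rcases le_or_gt (h.eigenvalues i) lam with hi | hi
      · exact hlow i hi
      · have := (Finset.sum_eq_zero_iff_of_nonpos hterm).1 hsum i (Finset.mem_univ i)
        exact pow_eq_zero_iff two_ne_zero |>.1
          ((mul_eq_zero.1 this).resolve_left (by linarith))
    rw [map_zero, ← (eigenCoords h).map_eq_zero_iff, hzero]
  simpa [evCountBelow_eq_card h] using LinearMap.finrank_le_finrank_of_injective hinj

lemma exists_submodule_finrank_eq_evCountBelow (h : M.IsHermitian) (lam : ℝ) :
    ∃ V : Submodule ℝ (n → ℝ), Module.finrank ℝ V = evCountBelow M lam ∧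
      ∀ v ∈ V, v ⬝ᵥ (M *ᵥ v) ≤ lam * (v ⬝ᵥ v) := by
  let f : ({i // h.eigenvalues i ≤ lam} → ℝ) →ₗ[ℝ] n → ℝ :=
    (eigenCoords h).symm.toLinearMap ∘ₗ Function.ExtendByZero.linearMap ℝ Subtype.val
  have hf : Function.Injective f :=
    (eigenCoords h).symm.injective.comp (Function.extend_injective Subtype.val_injective _)
  refine ⟨LinearMap.range f, ?_, ?_⟩
  · rw [LinearMap.finrank_range_of_inj hf, evCountBelow_eq_card h,
      Module.finrank_fintype_fun_eq_card]
  · rintro _ ⟨c, rfl⟩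
    rw [← sub_nonneg, mul_sub_quadForm_eq_sum h]
    refine Finset.sum_nonneg fun i _ => ?_
    by_cases hi : h.eigenvalues i ≤ lam
    · exact mul_nonneg (sub_nonneg.2 hi) (sq_nonneg _)
    · have : ¬ ∃ j : {i // h.eigenvalues i ≤ lam}, j.1 = i := by rintro ⟨j, rfl⟩; exact hi j.2
      simp [f, Function.extend_apply' _ _ _ this]

lemma evCountBelow_submatrix_le (h : M.IsHermitian) {e : m → n} (he : Function.Injective e) :
    evCountBelow (M.submatrix e e) lam ≤ evCountBelow M lam := by
  obtain ⟨V, hVdim, hV⟩ := exists_submodule_finrank_eq_evCountBelow (h.submatrix e) lam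
  rw [← hVdim]
  refine finrank_le_evCountBelow h (Function.ExtendByZero.linearMap ℝ e ∘ₗ V.subtype)
    ((Function.extend_injective he 0).comp V.injective_subtype) fun v => ?_
  have hsupp : ∀ j ∉ range e, Function.extend e (v : m → ℝ) 0 j = 0 :=
    fun j hj => Function.extend_apply' _ _ _ hj
  refine (submatrix_quadForm_le_iff he hsupp).1 ?_
  rw [Function.extend_comp he]
  exact hV v v.2

/-- Restricting to the vectors that vanish outside `range e` costs at most
`card n - card m` dimensions. -/
lemma evCountBelow_add_card_le (h : M.IsHermitian) {e : m → n} (he : Function.Injective e) :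
    evCountBelow M lam + Fintype.card m ≤
      evCountBelow (M.submatrix e e) lam + Fintype.card n := by
  obtain ⟨V, hVdim, hV⟩ := exists_submodule_finrank_eq_evCountBelow h lam
  let r : V →ₗ[ℝ] ({j // j ∉ range e} → ℝ) := LinearMap.funLeft ℝ ℝ Subtype.val ∘ₗ V.subtype
  have hsupp : ∀ v : LinearMap.ker r, ∀ j ∉ range e, (v.1.1 : n → ℝ) j = 0 :=
    fun v j hj => congrFun (LinearMap.mem_ker.1 v.2) ⟨j, hj⟩
  have hker : Module.finrank ℝ (LinearMap.ker r) ≤ evCountBelow (M.submatrix e e) lam := by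
    refine finrank_le_evCountBelow (h.submatrix e)
      (LinearMap.funLeft ℝ ℝ e ∘ₗ V.subtype ∘ₗ (LinearMap.ker r).subtype) (fun v w hvw => ?_)
      fun v => (submatrix_quadForm_le_iff he (hsupp v)).2 (hV _ v.1.2)
    ext j
    by_cases hj : j ∈ range e
    · obtain ⟨i, rfl⟩ := hj
      exact congrFun hvw i
    · rw [hsupp v j hj, hsupp w j hj]
  have hrange : Module.finrank ℝ (LinearMap.range r) ≤ Fintype.card {j // j ∉ range e} := by
    simpa only [Module.finrank_fintype_fun_eq_card] using (LinearMap.range r).finrank_le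
  have hcompl : Fintype.card {j // j ∉ range e} + Fintype.card m = Fintype.card n := by
    rw [Fintype.card_congr (Equiv.ofInjective e he), add_comm]
    exact Fintype.card_congr (Equiv.sumCompl (· ∈ range e)) ▸ Fintype.card_sum.symm
  have := r.finrank_range_add_finrank_ker
  omega

lemma evCountBelow_submatrix_equiv (e : m ≃ n) :
    evCountBelow (M.submatrix e e) lam = evCountBelow M lam := by
  by_cases h : M.IsHermitian
  · have := evCountBelow_add_card_le (lam := lam) h e.injective
    rw [Fintype.card_congr e] at this
    exact (evCountBelow_submatrix_le h e.injective).antisymm (by omega)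
  · rw [evCountBelow, evCountBelow, dif_neg h, dif_neg (by rwa [isHermitian_submatrix_equiv])]

lemma evCountBelow_eq_card_roots (h : M.IsHermitian) (lam : ℝ) :
    evCountBelow M lam = (M.charpoly.roots.filter (· ≤ lam)).card := by
  rw [evCountBelow_eq_card h, h.roots_charpoly_eq_eigenvalues, Multiset.filter_map,
    Multiset.card_map, Fintype.card_subtype]
  rfl

lemma evCountBelow_fromBlocks {N : Matrix m m ℝ} (hM : M.IsHermitian) (hN : N.IsHermitian) :
    evCountBelow (fromBlocks M 0 0 N) lam = evCountBelow M lam + evCountBelow N lam := by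
  rw [evCountBelow_eq_card_roots hM, evCountBelow_eq_card_roots hN,
    evCountBelow_eq_card_roots (hM.fromBlocks (by simp) hN), charpoly_fromBlocks_zero₁₂,
    Polynomial.roots_mul (mul_ne_zero M.charpoly_monic.ne_zero N.charpoly_monic.ne_zero),
    Multiset.filter_add, Multiset.card_add]

lemma evCountBelow_le_card (M : Matrix n n ℝ) (lam : ℝ) :
    evCountBelow M lam ≤ Fintype.card n := by
  rw [evCountBelow]
  split_ifs
  · exact Fintype.card_subtype_le _
  · exact Nat.zero_le _

end EigenvalueCounting

section EigenvalueCountOn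

variable {ι κ J : Type} {a : ι → ι → ℝ} {lam : ℝ} {X Y : Set ι}

/-- The number of eigenvalues `≤ lam` of the matrix `(a x y)` with indices `x, y ∈ X`, for a finite
set `X`; by convention it is `0` if `X` is infinite. -/
def evCountOn (a : ι → ι → ℝ) (lam : ℝ) (X : Set ι) : ℕ :=
  haveI := Classical.propDecidable X.Finite
  if h : X.Finite then
    haveI := h.fintype
    haveI : DecidableEq X := Classical.decEq _
    evCountBelow (Matrix.of fun x y : X => a x y) lam
  else 0

lemma evCountOn_eq_evCountBelow (a : ι → ι → ℝ) (lam : ℝ) (X : Set ι) [Fintype X]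
    [DecidableEq X] : evCountOn a lam X = evCountBelow (Matrix.of fun x y : X => a x y) lam := by
  rw [evCountOn, dif_pos X.toFinite]
  congr!

lemma idsVal_eq_evCountOn_div (d : ℕ) (S : Set (Set (Pt d)))
    (A : Set (Set (Pt d)) → Set (Pt d) → Set (Pt d) → ℝ) (B : Set (Pt d)) (lam : ℝ) :
    idsVal d S A B lam = evCountOn (A S) lam (tilesMeeting d S B) / volOf d B := by
  unfold idsVal evCountOn
  split_ifs <;> simp

lemma isHermitian_of_symmOn (ha : ∀ x ∈ X, ∀ y ∈ X, a x y = a y x) :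
    (Matrix.of fun x y : X => a x y).IsHermitian := by
  ext x y
  exact ha y y.2 x x.2

lemma evCountOn_mono (hY : Y.Finite) (ha : ∀ x ∈ Y, ∀ y ∈ Y, a x y = a y x) (hXY : X ⊆ Y) :
    evCountOn a lam X ≤ evCountOn a lam Y := by
  classical
  have := hY.fintype
  have := (hY.subset hXY).fintype
  rw [evCountOn_eq_evCountBelow, evCountOn_eq_evCountBelow]
  exact evCountBelow_submatrix_le (isHermitian_of_symmOn ha) (inclusion_injective hXY)

lemma evCountOn_le_add_ncard_sdiff (hY : Y.Finite) (ha : ∀ x ∈ Y, ∀ y ∈ Y, a x y = a y x)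
    (hXY : X ⊆ Y) : evCountOn a lam Y ≤ evCountOn a lam X + (Y \ X).ncard := by
  classical
  have := hY.fintype
  have := (hY.subset hXY).fintype
  have hcount := evCountBelow_add_card_le (lam := lam) (isHermitian_of_symmOn ha)
    (inclusion_injective hXY)
  have hcard := ncard_sdiff_add_ncard_of_subset hXY hY
  rw [← Nat.card_coe_set_eq X, ← Nat.card_coe_set_eq Y, Nat.card_eq_fintype_card,
    Nat.card_eq_fintype_card] at hcard
  rw [evCountOn_eq_evCountBelow, evCountOn_eq_evCountBelow]
  change _ ≤ evCountBelow ((Matrix.of fun x y : Y => a x y).submatrix (inclusion hXY)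
    (inclusion hXY)) lam + _
  omega

lemma evCountOn_le_ncard (a : ι → ι → ℝ) (lam : ℝ) (hX : X.Finite) :
    evCountOn a lam X ≤ X.ncard := by
  classical
  have := hX.fintype
  rw [evCountOn_eq_evCountBelow, ← Nat.card_coe_set_eq, Nat.card_eq_fintype_card]
  exact evCountBelow_le_card _ _

lemma evCountOn_empty (a : ι → ι → ℝ) (lam : ℝ) : evCountOn a lam ∅ = 0 := by
  simpa using evCountOn_le_ncard a lam finite_empty

lemma evCountOn_image {b : κ → κ → ℝ} {f : ι → κ} (hf : InjOn f X)
    (hb : ∀ x ∈ X, ∀ y ∈ X, b (f x) (f y) = a x y) :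
    evCountOn b lam (f '' X) = evCountOn a lam X := by
  classical
  by_cases hX : X.Finite
  · have := hX.fintype
    rw [evCountOn_eq_evCountBelow, evCountOn_eq_evCountBelow,
      ← evCountBelow_submatrix_equiv (Equiv.Set.imageOfInjOn f X hf)]
    congr 1
    ext x y
    exact hb x x.2 y y.2
  · rw [evCountOn, evCountOn, dif_neg hX, dif_neg fun h => hX (h.of_finite_image hf)]

lemma evCountOn_union (hX : X.Finite) (hY : Y.Finite) (hXY : Disjoint X Y)
    (ha : ∀ x ∈ X ∪ Y, ∀ y ∈ X ∪ Y, a x y = a y x) (h0 : ∀ x ∈ X, ∀ y ∈ Y, a x y = 0) :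
    evCountOn a lam (X ∪ Y) = evCountOn a lam X + evCountOn a lam Y := by
  classical
  have := hX.fintype
  have := hY.fintype
  rw [evCountOn_eq_evCountBelow, evCountOn_eq_evCountBelow, evCountOn_eq_evCountBelow,
    ← evCountBelow_submatrix_equiv (Equiv.Set.union hXY).symm,
    ← evCountBelow_fromBlocks
      (isHermitian_of_symmOn fun x hx y hy => ha x (.inl hx) y (.inl hy))
      (isHermitian_of_symmOn fun x hx y hy => ha x (.inr hx) y (.inr hy))]
  congr 1
  ext (x | x) (y | y)
  · simp
  · simp [h0 x x.2 y y.2]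
  · simp [ha x (.inr x.2) y (.inl y.2), h0 y y.2 x x.2]
  · simp

lemma evCountOn_biUnion {I : Finset J} {X : J → Set ι} (hfin : ∀ i ∈ I, (X i).Finite)
    (hdisj : (I : Set J).PairwiseDisjoint X)
    (ha : ∀ x ∈ ⋃ i ∈ I, X i, ∀ y ∈ ⋃ i ∈ I, X i, a x y = a y x)
    (h0 : ∀ i ∈ I, ∀ j ∈ I, i ≠ j → ∀ x ∈ X i, ∀ y ∈ X j, a x y = 0) :
    evCountOn a lam (⋃ i ∈ I, X i) = ∑ i ∈ I, evCountOn a lam (X i) := by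
  classical
  induction I using Finset.induction_on with
  | empty => simp [evCountOn_empty]
  | insert i I hi ih =>
    simp only [Finset.forall_mem_insert, Finset.coe_insert] at hfin hdisj h0
    rw [Finset.set_biUnion_insert] at ha ⊢
    have hne : ∀ j ∈ I, i ≠ j := fun j hj h => hi (h ▸ hj)
    have hunion : (⋃ j ∈ I, X j).Finite := I.finite_toSet.biUnion hfin.2
    rw [Finset.sum_insert hi, evCountOn_union hfin.1 hunion _ ha,
      ih hfin.2 (hdisj.subset (subset_insert _ _)) (fun x hx y hy => ha x (.inr hx) y (.inr hy))
        fun j hj => (h0.2 j hj).2]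
    · simp only [mem_iUnion]
      rintro x hx y ⟨j, hj, hy⟩
      exact h0.1.2 j hj (hne j hj) x hx y hy
    · exact disjoint_iUnion₂_right.2 fun j hj =>
        hdisj (mem_insert _ _) (mem_insert_of_mem _ hj) (hne j hj)

/-- Decoupling: the `X i` are the parts of the blocks `Q i` deep enough not to interact with one
another, so their counts add up, and every other index costs at most one eigenvalue. -/
lemma abs_evCountOn_sub_sum_le {S : Set ι} (ha : ∀ x ∈ S, ∀ y ∈ S, a x y = a y x)
    {I : Finset J} {X Q : J → Set ι} (hY : Y.Finite) (hQ : ∀ i ∈ I, (Q i).Finite)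
    (hYS : Y ⊆ S) (hQS : ∀ i ∈ I, Q i ⊆ S) (hXQ : ∀ i ∈ I, X i ⊆ Q i) (hXY : ∀ i ∈ I, X i ⊆ Y)
    (hdisj : (I : Set J).PairwiseDisjoint X)
    (h0 : ∀ i ∈ I, ∀ j ∈ I, i ≠ j → ∀ x ∈ X i, ∀ y ∈ X j, a x y = 0) :
    |(evCountOn a lam Y : ℝ) - ∑ i ∈ I, (evCountOn a lam (Q i) : ℝ)| ≤
      (Y \ ⋃ i ∈ I, X i).ncard + ∑ i ∈ I, ((Q i \ X i).ncard : ℝ) := by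
  have haY : ∀ x ∈ Y, ∀ y ∈ Y, a x y = a y x := fun x hx y hy => ha x (hYS hx) y (hYS hy)
  have haQ : ∀ i ∈ I, ∀ x ∈ Q i, ∀ y ∈ Q i, a x y = a y x := fun i hi x hx y hy =>
    ha x (hQS i hi hx) y (hQS i hi hy)
  have hsub : ⋃ i ∈ I, X i ⊆ Y := iUnion₂_subset hXY
  have hsum : evCountOn a lam (⋃ i ∈ I, X i) = ∑ i ∈ I, evCountOn a lam (X i) :=
    evCountOn_biUnion (fun i hi => hY.subset (hXY i hi)) hdisj
      (fun x hx y hy => haY x (hsub hx) y (hsub hy)) h0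
  have hYlower := evCountOn_mono (lam := lam) hY haY hsub
  have hYupper := evCountOn_le_add_ncard_sdiff (lam := lam) hY haY hsub
  have hQlower : ∑ i ∈ I, evCountOn a lam (X i) ≤ ∑ i ∈ I, evCountOn a lam (Q i) :=
    Finset.sum_le_sum fun i hi => evCountOn_mono (hQ i hi) (haQ i hi) (hXQ i hi)
  have hQupper : ∑ i ∈ I, evCountOn a lam (Q i) ≤
      ∑ i ∈ I, evCountOn a lam (X i) + ∑ i ∈ I, (Q i \ X i).ncard := by
    rw [← Finset.sum_add_distrib]
    exact Finset.sum_le_sum fun i hi =>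
      evCountOn_le_add_ncard_sdiff (hQ i hi) (haQ i hi) (hXQ i hi)
  rw [hsum] at hYlower hYupper
  rify at hYlower hYupper hQlower hQupper
  exact abs_le.2 ⟨by linarith, by linarith⟩

end EigenvalueCountOn

section BoxVolume

variable {ι : Type*}

/-- The upper corner of the cube of side `l` with lower corner `o`. -/
def cubeTop (o : ι → ℝ) (l : ℝ) : ι → ℝ := fun j => o j + l

lemma cubeTop_sub (o : ι → ℝ) (l : ℝ) (j : ι) : cubeTop o l j - o j = l := add_sub_cancel_left _ _

variable [Fintype ι] {a b : ι → ℝ}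

/-- The volume of the box with lower corner `a` and upper corner `b`. -/
def boxVol (a b : ι → ℝ) : ℝ := ∏ j, (b j - a j)

lemma boxVol_cubeTop (o : ι → ℝ) (l : ℝ) : boxVol o (cubeTop o l) = l ^ Fintype.card ι := by
  simp [boxVol, cubeTop_sub]

lemma boxVol_nonneg (h : ∀ j, a j ≤ b j) : 0 ≤ boxVol a b :=
  Finset.prod_nonneg fun j _ => sub_nonneg.2 (h j)

lemma boxVol_mono {a' b' : ι → ℝ} (h : ∀ j, a' j ≤ b' j) (ha : a ≤ a') (hb : b' ≤ b) :
    boxVol a' b' ≤ boxVol a b :=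
  Finset.prod_le_prod (fun j _ => sub_nonneg.2 (h j)) fun j _ => sub_le_sub (hb j) (ha j)

lemma exists_abs_prod_sub_prod_le (ι : Type*) [Fintype ι] {η : ℝ} (hη : 0 < η) :
    ∃ δ > 0, ∀ s c : ι → ℝ, (∀ j, 0 ≤ s j) → (∀ j, |c j - s j| ≤ δ * s j) →
      |∏ j, c j - ∏ j, s j| ≤ η * ∏ j, s j := by
  have hlim : Tendsto (fun δ : ℝ => ((1 - δ) ^ Fintype.card ι, (1 + δ) ^ Fintype.card ι)) (𝓝[>] 0)
      (𝓝 (1, 1)) := by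
    refine tendsto_nhdsWithin_of_tendsto_nhds (Continuous.tendsto' ?_ _ _ (by simp))
    fun_prop
  obtain ⟨δ, hlower, hupper, hδ0, hδ1⟩ := ((hlim.fst_nhds.eventually_const_le
    (sub_lt_self 1 hη)).and ((hlim.snd_nhds.eventually_le_const (lt_add_of_pos_right 1 hη)).and
      (Ioc_mem_nhdsGT one_pos))).exists
  refine ⟨δ, hδ0, fun s c hs hc => ?_⟩
  have hprod : 0 ≤ ∏ j, s j := Finset.prod_nonneg fun j _ => hs j
  have hpow : ∀ x : ℝ, x ^ Fintype.card ι * ∏ j, s j = ∏ j, x * s j := by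
    simp [Finset.prod_mul_distrib]
  have hclower : (1 - η) * ∏ j, s j ≤ ∏ j, c j := by
    refine (mul_le_mul_of_nonneg_right hlower hprod).trans ?_
    rw [hpow]
    exact Finset.prod_le_prod (fun j _ => mul_nonneg (sub_nonneg.2 hδ1) (hs j))
      fun j _ => by linarith [(abs_le.1 (hc j)).1]
  have hcupper : ∏ j, c j ≤ (1 + η) * ∏ j, s j := by
    refine le_trans ?_ (mul_le_mul_of_nonneg_right hupper hprod)
    rw [hpow]
    refine Finset.prod_le_prod (fun j _ => ?_) fun j _ => by linarith [(abs_le.1 (hc j)).2]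
    nlinarith [(abs_le.1 (hc j)).1, hs j]
  exact abs_le.2 ⟨by linarith, by linarith⟩

lemma eventually_abs_boxVol_margin_sub_le (ι : Type*) [Fintype ι] (r : ℝ) {η : ℝ} (hη : 0 < η) :
    ∀ᶠ w in atTop, ∀ a b : ι → ℝ, (∀ j, w ≤ b j - a j) →
      |boxVol (fun j => a j - r) (fun j => b j + r) - boxVol a b| ≤ η * boxVol a b := by
  obtain ⟨δ, hδ, hprod⟩ := exists_abs_prod_sub_prod_le ι hη
  filter_upwards [eventually_ge_atTop (2 * |r| / δ)] with w hw a b hab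
  have hside : ∀ j, 2 * |r| / δ ≤ b j - a j := fun j => hw.trans (hab j)
  refine hprod _ _ (fun j => le_trans (by positivity) (hside j)) fun j => ?_
  have : 2 * |r| ≤ δ * (b j - a j) := (div_le_iff₀' hδ).1 (hside j)
  rwa [show b j + r - (a j - r) - (b j - a j) = 2 * r by ring, abs_mul, abs_two]

end BoxVolume

section Grid

variable {ι : Type*} {o : ι → ℝ} {l : ℝ}

/-- The lower corner of the cell with index `i` in the grid of cubes of side `l` anchored
at `o`. -/
def gridCorner (o : ι → ℝ) (l : ℝ) (i : ι → ℤ) : ι → ℝ := fun j => o j + i j * l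

lemma gridCorner_index_eq {i k : ι → ℤ} {p : ι → ℝ} (hl : 0 < l)
    (hi : ∀ j, p j ∈ Ioo (gridCorner o l i j) (cubeTop (gridCorner o l i) l j))
    (hk : ∀ j, p j ∈ Ioo (gridCorner o l k j) (cubeTop (gridCorner o l k) l j)) : i = k := by
  have hlt : ∀ {i k : ι → ℤ} (j : ι), gridCorner o l i j < p j →
      p j < cubeTop (gridCorner o l k) l j → i j ≤ k j := by
    intro i k j hi hk
    simp only [gridCorner, cubeTop] at hi hk
    have : (i j : ℝ) < k j + 1 := lt_of_mul_lt_mul_right (by linarith) hl.le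
    exact Int.lt_add_one_iff.1 (by exact_mod_cast this)
  exact funext fun j => (hlt j (hi j).1 (hk j).2).antisymm (hlt j (hk j).1 (hi j).2)

variable [Fintype ι] {a b : ι → ℝ}

open Classical in
/-- The indices of the grid cells contained in the box with corners `a` and `b`. -/
def gridCells (a b o : ι → ℝ) (l : ℝ) : Finset (ι → ℤ) :=
  Fintype.piFinset fun j => Finset.Ico ⌈(a j - o j) / l⌉ ⌊(b j - o j) / l⌋

lemma mem_gridCells (hl : 0 < l) {i : ι → ℤ} :
    i ∈ gridCells a b o l ↔ a ≤ gridCorner o l i ∧ cubeTop (gridCorner o l i) l ≤ b := by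
  simp only [gridCells, Fintype.mem_piFinset, Finset.mem_Ico, gridCorner, cubeTop, Pi.le_def,
    ← forall_and]
  refine forall_congr' fun j => and_congr ?_ ?_
  · rw [Int.ceil_le, div_le_iff₀ hl, sub_le_iff_le_add']
  · rw [← Int.add_one_le_iff, Int.le_floor, le_div_iff₀ hl, le_sub_iff_add_le']
    push_cast
    rw [add_one_mul, ← add_assoc]

lemma abs_card_Ico_ceil_floor_sub_le {x y : ℝ} (hxy : x ≤ y) :
    |((Finset.Ico ⌈x⌉ ⌊y⌋).card : ℝ) - (y - x)| ≤ 2 := by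
  have hcard : ((Finset.Ico ⌈x⌉ ⌊y⌋).card : ℝ) = max ((⌊y⌋ : ℝ) - ⌈x⌉) 0 := by
    rw [Int.card_Ico]
    exact_mod_cast Int.toNat_eq_max _
  have := Int.lt_floor_add_one y
  have := Int.floor_le y
  have := Int.ceil_lt_add_one x
  have := Int.le_ceil x
  rw [hcard, abs_le]
  constructor
  · linarith [le_max_left ((⌊y⌋ : ℝ) - ⌈x⌉) 0]
  · linarith [max_le (show (⌊y⌋ : ℝ) - ⌈x⌉ ≤ y - x by linarith) (sub_nonneg.2 hxy)]

lemma eventually_abs_card_gridCells_sub_le (ι : Type*) [Fintype ι] {η : ℝ} (hη : 0 < η) :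
    ∀ᶠ m : ℝ in atTop, ∀ l > 0, ∀ a b o : ι → ℝ, (∀ j, m * l ≤ b j - a j) →
      |(gridCells a b o l).card * l ^ Fintype.card ι - boxVol a b| ≤ η * boxVol a b := by
  obtain ⟨δ, hδ, hprod⟩ := exists_abs_prod_sub_prod_le ι hη
  filter_upwards [eventually_ge_atTop (2 / δ)] with m hm l hl a b o hab
  have hside : ∀ j, 2 / δ * l ≤ b j - a j :=
    fun j => (mul_le_mul_of_nonneg_right hm hl.le).trans (hab j)
  classical
  have hcard : ((gridCells a b o l).card : ℝ) * l ^ Fintype.card ι =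
      ∏ j, ((Finset.Ico ⌈(a j - o j) / l⌉ ⌊(b j - o j) / l⌋).card : ℝ) * l := by
    rw [Finset.prod_mul_distrib, gridCells, Fintype.card_piFinset]
    simp
  rw [hcard]
  refine hprod _ _ (fun j => le_trans (by positivity) (hside j)) fun j => ?_
  have hnonneg : 0 ≤ b j - a j := le_trans (by positivity) (hside j)
  have hcount := abs_card_Ico_ceil_floor_sub_le
    (div_le_div_of_nonneg_right (show a j - o j ≤ b j - o j by linarith) hl.le)
  calc |((Finset.Ico ⌈(a j - o j) / l⌉ ⌊(b j - o j) / l⌋).card : ℝ) * l - (b j - a j)|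
      = |((Finset.Ico ⌈(a j - o j) / l⌉ ⌊(b j - o j) / l⌋).card : ℝ)
          - ((b j - o j) / l - (a j - o j) / l)| * l := by
        rw [← abs_of_pos hl, ← abs_mul, abs_of_pos hl]
        congr 1
        field_simp
        ring
    _ ≤ 2 * l := mul_le_mul_of_nonneg_right hcount hl.le
    _ = δ * (2 / δ * l) := by field_simp
    _ ≤ δ * (b j - a j) := mul_le_mul_of_nonneg_left (hside j) hδ.le

end Grid

section MeanValue

variable {W ι : Type*} [Fintype ι] {N N' : W → (ι → ℝ) → (ι → ℝ) → ℝ}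

/-- A box function `N S a b` (on the box with corners `a` and `b`, in the environment `S`) is
almost additive if the error made when cutting a box into the cells of a grid is negligible,
relative to the volume, for large cells and boxes much larger than the cells. -/
def AlmostAdditive (N : W → (ι → ℝ) → (ι → ℝ) → ℝ) : Prop :=
  ∀ η > 0, ∀ᶠ m : ℝ in atTop, ∀ᶠ l : ℝ in atTop, ∀ S a b o, (∀ j, m * l ≤ b j - a j) →
    |N S a b - ∑ i ∈ gridCells a b o l, N S (gridCorner o l i) (cubeTop (gridCorner o l i) l)| ≤
      η * boxVol a b

/-- `u` bounds the density `N S a b / boxVol a b` on all boxes of large width. -/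
def IsUpperDensity (N : W → (ι → ℝ) → (ι → ℝ) → ℝ) (u : ℝ) : Prop :=
  ∀ᶠ w in atTop, ∀ S a b, (∀ j, w ≤ b j - a j) → N S a b ≤ u * boxVol a b

/-- Every value of `N` on a large cube of side `L` reappears, in each environment, inside each cube
of side `K * L`, with `K` independent of `L`. -/
def IsLinearlyRecurrent (N : W → (ι → ℝ) → (ι → ℝ) → ℝ) : Prop :=
  ∃ K : ℝ, 1 ≤ K ∧ ∀ᶠ L in atTop, ∀ S o S' a, ∃ o', a ≤ o' ∧ cubeTop o' L ≤ cubeTop a (K * L) ∧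
    N S' o' (cubeTop o' L) = N S o (cubeTop o L)

lemma AlmostAdditive.add (hN : AlmostAdditive N) (hN' : AlmostAdditive N') :
    AlmostAdditive fun S a b => N S a b + N' S a b := by
  intro η hη
  filter_upwards [hN (η / 2) (half_pos hη), hN' (η / 2) (half_pos hη)] with m hm hm'
  filter_upwards [hm, hm'] with l hl hl' S a b o hab
  rw [Finset.sum_add_distrib, add_sub_add_comm]
  linarith [abs_add_le (N S a b - ∑ i ∈ gridCells a b o l, N S (gridCorner o l i)
    (cubeTop (gridCorner o l i) l)) (N' S a b - ∑ i ∈ gridCells a b o l, N' S (gridCorner o l i)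
    (cubeTop (gridCorner o l i) l)), hl S a b o hab, hl' S a b o hab]

lemma AlmostAdditive.const_mul (hN : AlmostAdditive N) (c : ℝ) :
    AlmostAdditive fun S a b => c * N S a b := by
  intro η hη
  filter_upwards [hN (η / (|c| + 1)) (by positivity)] with m hm
  filter_upwards [hm] with l hl S a b o hab
  rw [← Finset.mul_sum, ← mul_sub, abs_mul]
  have h := hl S a b o hab
  rw [div_mul_eq_mul_div, le_div_iff₀ (by positivity)] at h
  linarith [abs_nonneg (N S a b - ∑ i ∈ gridCells a b o l, N S (gridCorner o l i)
    (cubeTop (gridCorner o l i) l))]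

lemma almostAdditive_boxVol : AlmostAdditive fun (_ : W) (a b : ι → ℝ) => boxVol a b := by
  intro η hη
  filter_upwards [eventually_abs_card_gridCells_sub_le ι hη] with m hm
  filter_upwards [eventually_gt_atTop 0] with l hl _ a b o hab
  rw [abs_sub_comm]
  simpa [boxVol_cubeTop] using hm l hl a b o hab

lemma AlmostAdditive.sub_mul_boxVol (hN : AlmostAdditive N) (u : ℝ) :
    AlmostAdditive fun S a b => N S a b - u * boxVol a b := by
  simpa [sub_eq_add_neg] using hN.add (almostAdditive_boxVol.const_mul (-u))

lemma AlmostAdditive.isUpperDensity_of_cubes_nonpos (hN : AlmostAdditive N) {η : ℝ} (hη : 0 < η) :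
    ∀ᶠ l in atTop, (∀ S o, N S o (cubeTop o l) ≤ 0) → IsUpperDensity N η := by
  obtain ⟨m, hm⟩ := (hN η hη).exists
  filter_upwards [hm] with l hl hcubes
  filter_upwards [eventually_ge_atTop (m * l)] with w hw S a b hab
  have hgrid := (abs_le.1 (hl S a b a fun j => hw.trans (hab j))).2
  linarith [Finset.sum_nonpos fun i (_ : i ∈ gridCells a b a l) => hcubes S (gridCorner a l i)]

lemma AlmostAdditive.le_subbox_add (hN : AlmostAdditive N)
    (hcubes : ∀ᶠ l in atTop, ∀ S o, N S o (cubeTop o l) ≤ 0) {η : ℝ} (hη : 0 < η) :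
    ∀ᶠ w in atTop, ∀ S a b a' b', (∀ j, w ≤ b' j - a' j) → a ≤ a' → b' ≤ b →
      N S a b ≤ N S a' b' + η * boxVol a b := by
  obtain ⟨m, hm, hm0⟩ := ((hN (η / 2) (half_pos hη)).and (eventually_gt_atTop 0)).exists
  have hdiv : Tendsto (fun w : ℝ => w / m) atTop atTop := tendsto_id.atTop_div_const hm0
  filter_upwards [hdiv.eventually (hm.and (hcubes.and (eventually_gt_atTop 0))),
    eventually_ge_atTop 0] with w ⟨hgrid, hcubes, hl⟩ hw S a b a' b' hab' ha hb
  have hside : ∀ j, m * (w / m) ≤ b' j - a' j := fun j => by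
    rw [mul_div_cancel₀ _ hm0.ne']; exact hab' j
  have houter := (abs_le.1 (hgrid S a b a' fun j => by linarith [hside j, ha j, hb j])).2
  have hinner := (abs_le.1 (hgrid S a' b' a' hside)).1
  have hsub : gridCells a' b' a' (w / m) ⊆ gridCells a b a' (w / m) := by
    intro i hi
    rw [mem_gridCells hl] at hi ⊢
    exact ⟨ha.trans hi.1, hi.2.trans hb⟩
  have hsum := Finset.sum_le_sum_of_subset_of_nonneg hsub
    fun i _ _ => neg_nonneg.2 (hcubes S (gridCorner a' (w / m) i))
  rw [Finset.sum_neg_distrib, Finset.sum_neg_distrib] at hsum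
  have hvol := mul_le_mul_of_nonneg_left
    (boxVol_mono (fun j => by linarith [hw.trans (hab' j)]) ha hb) (half_pos hη).le
  linarith

/-- If some large cube had density at most `k - ε`, its recurrent copies would push the density of
all cubes that are `K` times as large below `k` by a definite amount. -/
lemma eventually_mul_lt_of_isLinearlyRecurrent (hN : AlmostAdditive N)
    (hrec : IsLinearlyRecurrent N) {k : ℝ} (hupper : ∀ δ > 0, IsUpperDensity N (k + δ))
    (hlower : ∀ δ > 0, ¬ IsUpperDensity N (k - δ)) {ε : ℝ} (hε : 0 < ε) :
    ∀ᶠ L in atTop, ∀ S o, (k - ε) * L ^ Fintype.card ι < N S o (cubeTop o L) := by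
  obtain ⟨K, hK, hrec⟩ := hrec
  have hK0 : 0 < K := by linarith
  set n := Fintype.card ι
  set θ := ε / (4 * K ^ n) with hθ
  have hθ0 : 0 < θ := by positivity
  have hcubes : ∀ᶠ l in atTop, ∀ (S : W) (o : ι → ℝ),
      N S o (cubeTop o l) - (k + θ) * boxVol o (cubeTop o l) ≤ 0 := by
    filter_upwards [hupper θ hθ0] with l hl S o
    exact sub_nonpos.2 (hl S o _ fun j => (cubeTop_sub o l j).ge)
  have hKtop : Tendsto (fun L : ℝ => K * L) atTop atTop := tendsto_id.const_mul_atTop hK0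
  filter_upwards [hrec, (hN.sub_mul_boxVol (k + θ)).le_subbox_add hcubes hθ0,
    hKtop.eventually ((hN.sub_mul_boxVol (k - 2 * θ)).isUpperDensity_of_cubes_nonpos hθ0),
    eventually_ge_atTop 0] with L hrec hsubbox hdensity hL S o
  by_contra! hlow
  refine hlower θ hθ0 ?_
  have hlarge : ∀ S' a, N S' a (cubeTop a (K * L)) - (k - 2 * θ) * boxVol a (cubeTop a (K * L))
      ≤ 0 := by
    intro S' a
    obtain ⟨o', hao', ho'L, hcopy⟩ := hrec S o S' a
    have hbound := hsubbox S' a _ o' _ (fun j => (cubeTop_sub o' L j).ge) hao' ho'L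
    rw [boxVol_cubeTop, boxVol_cubeTop, hcopy, mul_pow] at hbound
    rw [boxVol_cubeTop, mul_pow]
    have hεθ : ε = 4 * θ * K ^ n := by rw [hθ]; field_simp
    rw [hεθ] at hlow
    linarith [mul_nonneg hθ0.le (pow_nonneg hL n)]
  filter_upwards [hdensity hlarge] with w hw S' a b hab
  linarith [hw S' a b hab]

lemma bddBelow_setOf_isUpperDensity [Nonempty W] {D : ℝ}
    (hD : ∀ᶠ w in atTop, ∀ S a b, (∀ j, w ≤ b j - a j) → |N S a b| ≤ D * boxVol a b) :
    BddBelow {u | IsUpperDensity N u} := by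
  refine ⟨-D, fun u hu => ?_⟩
  obtain ⟨w, ⟨hu, hD⟩, hw⟩ := ((hu.and hD).and (eventually_gt_atTop 0)).exists
  have hside : ∀ j, w ≤ cubeTop (0 : ι → ℝ) w j - 0 := fun j => (cubeTop_sub 0 w j).ge
  have hle := hu (Classical.arbitrary W) 0 (cubeTop 0 w) hside
  have hge := (abs_le.1 (hD (Classical.arbitrary W) 0 (cubeTop 0 w) hside)).1
  rw [boxVol_cubeTop] at hle hge
  exact le_of_mul_le_mul_right (by linarith) (pow_pos hw (Fintype.card ι))

theorem exists_mean_of_isLinearlyRecurrent (hN : AlmostAdditive N) (hrec : IsLinearlyRecurrent N)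
    {D : ℝ} (hD : ∀ᶠ w in atTop, ∀ S a b, (∀ j, w ≤ b j - a j) → |N S a b| ≤ D * boxVol a b) :
    ∃ k : ℝ, ∀ ε > 0, ∀ᶠ w in atTop, ∀ S a b, (∀ j, w ≤ b j - a j) →
      |N S a b - k * boxVol a b| ≤ ε * boxVol a b := by
  rcases isEmpty_or_nonempty W with hW | hW
  · exact ⟨0, fun ε _ => .of_forall fun _ S => hW.elim S⟩
  have hbdd := bddBelow_setOf_isUpperDensity hD
  have hne : {u | IsUpperDensity N u}.Nonempty :=
    ⟨D, hD.mono fun w hw S a b hab => (abs_le.1 (hw S a b hab)).2⟩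
  set k := sInf {u | IsUpperDensity N u}
  have hupper : ∀ δ > 0, IsUpperDensity N (k + δ) := fun δ hδ => by
    obtain ⟨u, hu, huk⟩ := exists_lt_of_csInf_lt hne (lt_add_of_pos_right k hδ)
    filter_upwards [hu, eventually_ge_atTop 0] with w hw hw0 S a b hab
    exact (hw S a b hab).trans (mul_le_mul_of_nonneg_right huk.le
      (boxVol_nonneg fun j => by linarith [hab j]))
  have hlower : ∀ δ > 0, ¬ IsUpperDensity N (k - δ) := fun δ hδ h => by
    linarith [csInf_le hbdd h]
  refine ⟨k, fun ε hε => ?_⟩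
  obtain ⟨l, hcubes, hdensity⟩ := ((eventually_mul_lt_of_isLinearlyRecurrent hN hrec hupper hlower
    (half_pos hε)).and (((hN.sub_mul_boxVol (k - ε / 2)).const_mul
      (-1)).isUpperDensity_of_cubes_nonpos (half_pos hε))).exists
  have hneg : IsUpperDensity (fun S a b => -1 * (N S a b - (k - ε / 2) * boxVol a b)) (ε / 2) :=
    hdensity fun S o => by rw [boxVol_cubeTop]; linarith [hcubes S o]
  filter_upwards [hupper ε hε, hneg] with w hw hw' S a b hab
  exact abs_le.2 ⟨by linarith [hw' S a b hab], by linarith [hw S a b hab]⟩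

end MeanValue

section Boxes

variable {d : ℕ} {a b : Fin d → ℝ} {r ρ : ℝ} {p q : Pt d}

/-- The open box with corners `a` and `b`, enlarged by a margin `r` on every side, or shrunk if
`r < 0`. -/
def openBox (a b : Fin d → ℝ) (r : ℝ) : Set (Pt d) := {p | ∀ j, p j ∈ Ioo (a j - r) (b j + r)}

lemma openBox_eq_preimage (a b : Fin d → ℝ) (r : ℝ) :
    openBox a b r = WithLp.ofLp ⁻¹' univ.pi fun j => Ioo (a j - r) (b j + r) := by
  ext p
  simp [openBox]

lemma boxSet_eq_preimage (a b : Fin d → ℝ) :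
    boxSet d a b = WithLp.ofLp ⁻¹' univ.pi fun j => Icc (a j) (b j) := by
  ext p
  simp [boxSet, Pi.le_def, forall_and]

lemma measure_preimage_ofLp_pi {s : Fin d → Set ℝ} (hs : ∀ j, MeasurableSet (s j)) :
    volume (WithLp.ofLp ⁻¹' univ.pi s : Set (Pt d)) = ∏ j, volume (s j) := by
  rw [(PiLp.volume_preserving_ofLp (Fin d)).measure_preimage
    (MeasurableSet.univ_pi hs).nullMeasurableSet, volume_pi_pi]

lemma interior_boxSet (a b : Fin d → ℝ) : interior (boxSet d a b) = openBox a b 0 := by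
  rw [boxSet_eq_preimage, openBox_eq_preimage]
  have hpre := (PiLp.homeomorph 2 fun _ : Fin d => ℝ).preimage_interior
    (univ.pi fun j => Icc (a j) (b j))
  simp only [interior_pi_set finite_univ, interior_Icc] at hpre
  simp only [sub_zero, add_zero]
  exact hpre.symm

lemma measurableSet_openBox : MeasurableSet (openBox a b r) := by
  rw [openBox_eq_preimage]
  exact (MeasurableSet.univ_pi fun _ => measurableSet_Ioo).preimage
    (PiLp.volume_preserving_ofLp (Fin d)).measurable

lemma measureReal_openBox (h : ∀ j, a j - r ≤ b j + r) :
    volume.real (openBox a b r) = boxVol (fun j => a j - r) (fun j => b j + r) := by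
  rw [openBox_eq_preimage, measureReal_def, measure_preimage_ofLp_pi fun _ => measurableSet_Ioo,
    ENNReal.toReal_prod]
  exact Finset.prod_congr rfl fun j _ => by
    rw [Real.volume_Ioo, ENNReal.toReal_ofReal (sub_nonneg.2 (h j))]

lemma volOf_boxSet (h : ∀ j, a j ≤ b j) : volOf d (boxSet d a b) = boxVol a b := by
  rw [volOf, boxSet_eq_preimage, measure_preimage_ofLp_pi fun _ => measurableSet_Icc,
    ENNReal.toReal_prod]
  exact Finset.prod_congr rfl fun j _ => by
    rw [Real.volume_Icc, ENNReal.toReal_ofReal (sub_nonneg.2 (h j))]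

lemma measure_openBox_ne_top : volume (openBox a b r) ≠ ⊤ := by
  rw [openBox_eq_preimage, measure_preimage_ofLp_pi fun _ => measurableSet_Ioo]
  exact ENNReal.prod_ne_top fun j _ => measure_Ioo_lt_top.ne

lemma eventually_abs_measureReal_openBox_sub_le (d : ℕ) (r : ℝ) {η : ℝ} (hη : 0 < η) :
    ∀ᶠ w in atTop, ∀ a b : Fin d → ℝ, (∀ j, w ≤ b j - a j) →
      |volume.real (openBox a b r) - boxVol a b| ≤ η * boxVol a b := by
  filter_upwards [eventually_abs_boxVol_margin_sub_le (Fin d) r hη,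
    eventually_ge_atTop (-2 * r)] with w hw hwr a b hab
  rw [measureReal_openBox fun j => by linarith [hab j]]
  exact hw a b hab

lemma image_boxSet (h : ∀ j, a j ≤ b j) (j : Fin d) :
    (fun p : Pt d => p j) '' boxSet d a b = Icc (a j) (b j) := by
  refine Subset.antisymm (image_subset_iff.2 fun p hp => hp j) fun y hy => ?_
  refine ⟨WithLp.toLp 2 (Function.update a j y), fun i => ?_, by simp⟩
  obtain rfl | hij := eq_or_ne i j
  · simpa using hy
  · simp [hij, h i]

lemma widthOf_boxSet_le (h : ∀ j, a j ≤ b j) (j : Fin d) :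
    widthOf d (boxSet d a b) ≤ b j - a j := by
  refine (ciInf_le (finite_range _).bddBelow j).trans_eq ?_
  rw [image_boxSet h, csSup_Icc (h j), csInf_Icc (h j)]

lemma mem_openBox_of_dist_le (hp : p ∈ openBox a b r) (hpq : dist p q ≤ ρ) :
    q ∈ openBox a b (r + ρ) := by
  intro j
  have hj := abs_le.1 ((PiLp.dist_apply_le p q j).trans hpq)
  exact ⟨by linarith [(hp j).1], by linarith [(hp j).2]⟩

lemma openBox_subset_openBox {a' b' : Fin d → ℝ} {r' : ℝ} (ha : a ≤ a') (hb : b' ≤ b)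
    (hr : r' ≤ r) : openBox a' b' r' ⊆ openBox a b r := fun _ hp j =>
  ⟨by linarith [ha j, (hp j).1], by linarith [hb j, (hp j).2]⟩

lemma disjoint_openBox_gridCorner {o : Fin d → ℝ} {l : ℝ} (hl : 0 < l) {i k : Fin d → ℤ}
    (hik : i ≠ k) : Disjoint (openBox (gridCorner o l i) (cubeTop (gridCorner o l i) l) 0)
      (openBox (gridCorner o l k) (cubeTop (gridCorner o l k) l) 0) := by
  refine disjoint_left.2 fun p hi hk => hik (gridCorner_index_eq (o := o) (p := p) hl ?_ ?_)
  · simpa [openBox] using hi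
  · simpa [openBox] using hk

/-- The first difference is the volume of the enlarged box outside the inner cells, the sum of
differences that of the shells of the cells. -/
lemma eventually_gridShell_le (d : ℕ) (r s : ℝ) {η : ℝ} (hη : 0 < η) :
    ∀ᶠ m : ℝ in atTop, ∀ᶠ l : ℝ in atTop, ∀ a b o : Fin d → ℝ, (∀ j, m * l ≤ b j - a j) →
      volume.real (openBox a b r) - ∑ k ∈ gridCells a b o l,
          volume.real (openBox (gridCorner o l k) (cubeTop (gridCorner o l k) l) s) +
        ∑ k ∈ gridCells a b o l,
          (volume.real (openBox (gridCorner o l k) (cubeTop (gridCorner o l k) l) r) -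
            volume.real (openBox (gridCorner o l k) (cubeTop (gridCorner o l k) l) s)) ≤
      η * boxVol a b := by
  obtain ⟨e, he, he1, heη⟩ : ∃ e > 0, e ≤ 1 ∧ 8 * e ≤ η :=
    ⟨min 1 (η / 8), by positivity, min_le_left _ _, by linarith [min_le_right 1 (η / 8)]⟩
  filter_upwards [eventually_abs_card_gridCells_sub_le (Fin d) he, eventually_ge_atTop 1]
    with m hm hm1
  filter_upwards [eventually_abs_measureReal_openBox_sub_le d r he,
    eventually_abs_measureReal_openBox_sub_le d s he, eventually_gt_atTop 0]
    with l hr hs hl a b o hab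
  have hside : ∀ k j, l ≤ cubeTop (gridCorner o l k) l j - gridCorner o l k j :=
    fun k j => (cubeTop_sub _ l j).ge
  have hbox := (abs_le.1 (hr a b fun j => (le_mul_of_one_le_left hl.le hm1).trans (hab j))).2
  have hcell_r : ∀ k, volume.real (openBox (gridCorner o l k) (cubeTop (gridCorner o l k) l) r) ≤
      (1 + e) * l ^ Fintype.card (Fin d) := fun k => by
    have := (abs_le.1 (hr _ _ (hside k))).2
    rw [boxVol_cubeTop] at this
    linarith
  have hcell_s : ∀ k, (1 - e) * l ^ Fintype.card (Fin d) ≤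
      volume.real (openBox (gridCorner o l k) (cubeTop (gridCorner o l k) l) s) := fun k => by
    have := (abs_le.1 (hs _ _ (hside k))).1
    rw [boxVol_cubeTop] at this
    linarith
  have hsum_s := Finset.card_nsmul_le_sum (gridCells a b o l) _ _ fun k _ => hcell_s k
  have hsum_sub := Finset.sum_le_card_nsmul (gridCells a b o l) _ _
    fun k _ => sub_le_sub (hcell_r k) (hcell_s k)
  have hcard := abs_le.1 (hm l hl a b o hab)
  rw [nsmul_eq_mul] at hsum_s hsum_sub
  have hV : 0 ≤ boxVol a b := boxVol_nonneg fun j => by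
    linarith [hab j, mul_pos (one_pos.trans_le hm1) hl]
  nlinarith [mul_le_mul_of_nonneg_right heη hV, mul_le_mul_of_nonneg_left hcard.2 he.le,
    mul_nonneg (mul_nonneg he.le (sub_nonneg.2 he1)) hV]

end Boxes

section UniformTiling

variable {d : ℕ} {r ρ : ℝ} {S X : Set (Set (Pt d))} {x : Set (Pt d)}

/-- A cover of `ℝ^d` by closed sets with disjoint interiors that contain a ball of radius `r` and
have diameter at most `ρ`. -/
structure IsUniformTiling (r ρ : ℝ) (S : Set (Set (Pt d))) : Prop where
  radius_pos : 0 < r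
  cover : ∀ p, ∃ x ∈ S, p ∈ x
  disjoint : S.Pairwise fun x y => interior x ∩ interior y = ∅
  isClosed : ∀ x ∈ S, IsClosed x
  ball_subset : ∀ x ∈ S, ∃ c, ball c r ⊆ x
  dist_le : ∀ x ∈ S, ∀ p ∈ x, ∀ q ∈ x, dist p q ≤ ρ

namespace IsUniformTiling

lemma diam_nonneg (hS : IsUniformTiling r ρ S) : 0 ≤ ρ := by
  obtain ⟨x, hx, h0⟩ := hS.cover 0
  simpa using hS.dist_le x hx 0 h0 0 h0

lemma nonempty (hS : IsUniformTiling r ρ S) (hx : x ∈ S) : x.Nonempty := by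
  obtain ⟨c, hc⟩ := hS.ball_subset x hx
  exact ⟨c, hc (mem_ball_self hS.radius_pos)⟩

lemma measureReal_ball_pos (hS : IsUniformTiling r ρ S) :
    0 < volume.real (ball (0 : Pt d) r) :=
  ENNReal.toReal_pos (measure_ball_pos volume _ hS.radius_pos).ne' measure_ball_lt_top.ne

lemma card_mul_measureReal_ball_le (hS : IsUniformTiling r ρ S) {F : Finset (Set (Pt d))}
    (hF : ↑F ⊆ S) {G : Set (Pt d)} (hG : volume G ≠ ⊤) (hFG : ∀ x ∈ F, x ⊆ G) :
    F.card * volume.real (ball (0 : Pt d) r) ≤ volume.real G := by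
  choose! c hc using hS.ball_subset
  have hdisj : (F : Set (Set (Pt d))).PairwiseDisjoint fun x => ball (c x) r := by
    intro x hx y hy hxy
    have hint := disjoint_iff_inter_eq_empty.2 (hS.disjoint (hF hx) (hF hy) hxy)
    exact hint.mono (interior_maximal (hc x (hF hx)) isOpen_ball)
      (interior_maximal (hc y (hF hy)) isOpen_ball)
  calc F.card * volume.real (ball (0 : Pt d) r) = ∑ x ∈ F, volume.real (ball (c x) r) := by
        simp [Measure.addHaar_real_ball_center]
    _ = volume.real (⋃ x ∈ F, ball (c x) r) :=
        (measureReal_biUnion_finset hdisj fun _ _ => measurableSet_ball).symm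
    _ ≤ volume.real G := measureReal_mono
        (iUnion₂_subset fun x hx => (hc x (hF hx)).trans (hFG x hx)) hG

lemma finite_of_subset (hS : IsUniformTiling r ρ S) (hX : X ⊆ S) {G : Set (Pt d)}
    (hG : volume G ≠ ⊤) (hXG : ∀ x ∈ X, x ⊆ G) : X.Finite := by
  by_contra hinf
  obtain ⟨n, hn⟩ := exists_nat_gt (volume.real G / volume.real (ball (0 : Pt d) r))
  obtain ⟨F, hFX, rfl⟩ := Set.Infinite.exists_subset_card_eq hinf n
  rw [div_lt_iff₀ hS.measureReal_ball_pos] at hn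
  exact hn.not_ge (hS.card_mul_measureReal_ball_le (hFX.trans hX) hG fun x hx => hXG x (hFX hx))

lemma ncard_mul_measureReal_ball_le (hS : IsUniformTiling r ρ S) (hX : X ⊆ S) {G : Set (Pt d)}
    (hG : volume G ≠ ⊤) (hXG : ∀ x ∈ X, x ⊆ G) :
    X.ncard * volume.real (ball (0 : Pt d) r) ≤ volume.real G := by
  have hfin := hS.finite_of_subset hX hG hXG
  rw [ncard_eq_toFinset_card X hfin]
  exact hS.card_mul_measureReal_ball_le (by simpa using hX) hG (by simpa using hXG)

lemma ncard_mul_measureReal_ball_le_sub_sum (hS : IsUniformTiling r ρ S) (hX : X ⊆ S)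
    {G : Set (Pt d)} (hG : volume G ≠ ⊤) (hXG : ∀ x ∈ X, x ⊆ G) {J : Type*} {I : Finset J}
    {U : J → Set (Pt d)} (hU : ∀ i ∈ I, MeasurableSet (U i)) (hUG : ∀ i ∈ I, U i ⊆ G)
    (hdisj : (I : Set J).PairwiseDisjoint U) (hXU : ∀ x ∈ X, ∀ i ∈ I, Disjoint x (U i)) :
    X.ncard * volume.real (ball (0 : Pt d) r) ≤ volume.real G - ∑ i ∈ I, volume.real (U i) := by
  rw [← measureReal_biUnion_finset hdisj hU fun i hi => measure_ne_top_of_subset (hUG i hi) hG,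
    ← measureReal_sdiff (iUnion₂_subset hUG) (Finset.measurableSet_biUnion _ hU) hG]
  exact hS.ncard_mul_measureReal_ball_le hX (measure_ne_top_of_subset sdiff_subset hG)
    fun x hx => subset_sdiff.2 ⟨hXG x hx, disjoint_iUnion₂_right.2 (hXU x hx)⟩

lemma subset_openBox (hS : IsUniformTiling r ρ S) (hx : x ∈ S) {a b : Fin d → ℝ} {s : ℝ}
    (h : (x ∩ openBox a b s).Nonempty) : x ⊆ openBox a b (s + ρ) := by
  obtain ⟨p, hpx, hp⟩ := h
  exact fun q hq => mem_openBox_of_dist_le hp (hS.dist_le x hx p hpx q hq)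

end IsUniformTiling

end UniformTiling

section LocalOperator

variable {d : ℕ} {r ρ R : ℝ} {S : Set (Set (Pt d))} {A : Set (Pt d) → Set (Pt d) → ℝ} {lam : ℝ}
  {a b : Fin d → ℝ}

/-- A symmetric operator on the tiles of `S` whose entries vanish between tiles at distance at
least `R`. -/
structure IsLocalOperator (R : ℝ) (S : Set (Set (Pt d))) (A : Set (Pt d) → Set (Pt d) → ℝ) :
    Prop where
  symm : ∀ x ∈ S, ∀ y ∈ S, A x y = A y x
  finite_range : ∀ x ∈ S, ∀ y ∈ S, (∀ p ∈ x, ∀ q ∈ y, R ≤ dist p q) → A x y = 0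

/-- The number of eigenvalues `≤ lam` of the restriction of `A` to a box, i.e. the unnormalized
eigenvalue counting function. -/
def boxCount (lam : ℝ) (S : Set (Set (Pt d))) (A : Set (Pt d) → Set (Pt d) → ℝ)
    (a b : Fin d → ℝ) : ℝ := evCountOn A lam (tilesMeeting d S (boxSet d a b))

/-- The tiles contained in the box and at distance at least `R` from its faces. -/
def deepTiles (S : Set (Set (Pt d))) (R : ℝ) (a b : Fin d → ℝ) : Set (Set (Pt d)) :=
  {x ∈ S | x ⊆ openBox a b (-R)}

lemma mem_tilesMeeting_boxSet {x : Set (Pt d)} :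
    x ∈ tilesMeeting d S (boxSet d a b) ↔ x ∈ S ∧ (x ∩ openBox a b 0).Nonempty := by
  rw [tilesMeeting, interior_boxSet]
  rfl

namespace IsUniformTiling

lemma subset_openBox_of_mem_tilesMeeting (hS : IsUniformTiling r ρ S) {x : Set (Pt d)}
    (hx : x ∈ tilesMeeting d S (boxSet d a b)) : x ⊆ openBox a b ρ := by
  rw [mem_tilesMeeting_boxSet] at hx
  simpa using hS.subset_openBox hx.1 hx.2

lemma finite_tilesMeeting (hS : IsUniformTiling r ρ S) :
    (tilesMeeting d S (boxSet d a b)).Finite :=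
  hS.finite_of_subset (fun _ hx => hx.1) measure_openBox_ne_top
    fun _ hx => hS.subset_openBox_of_mem_tilesMeeting hx

lemma deepTiles_subset_tilesMeeting (hS : IsUniformTiling r ρ S) (hR : 0 ≤ R) {a' b' : Fin d → ℝ}
    (ha : a ≤ a') (hb : b' ≤ b) : deepTiles S R a' b' ⊆ tilesMeeting d S (boxSet d a b) := by
  rintro x ⟨hx, hdeep⟩
  obtain ⟨p, hp⟩ := hS.nonempty hx
  exact mem_tilesMeeting_boxSet.2
    ⟨hx, p, hp, openBox_subset_openBox ha hb (neg_nonpos.2 hR) (hdeep hp)⟩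

lemma disjoint_openBox_of_notMem_deepTiles (hS : IsUniformTiling r ρ S) {x : Set (Pt d)}
    (hx : x ∈ S) (hdeep : x ∉ deepTiles S R a b) : Disjoint x (openBox a b (-(R + ρ))) := by
  rw [disjoint_iff_inter_eq_empty, ← not_nonempty_iff_eq_empty]
  intro h
  exact hdeep ⟨hx, by simpa using hS.subset_openBox hx h⟩

lemma pairwiseDisjoint_deepTiles (hS : IsUniformTiling r ρ S) (hR : 0 ≤ R) {J : Type*} {I : Set J}
    {α β : J → Fin d → ℝ} (hdisj : I.PairwiseDisjoint fun i => openBox (α i) (β i) 0) :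
    I.PairwiseDisjoint fun i => deepTiles S R (α i) (β i) := by
  refine fun i hi k hk hik => disjoint_left.2 fun x hxi hxk => ?_
  obtain ⟨p, hp⟩ := hS.nonempty hxi.1
  exact disjoint_left.1 (hdisj hi hk hik)
    (openBox_subset_openBox le_rfl le_rfl (neg_nonpos.2 hR) (hxi.2 hp))
    (openBox_subset_openBox le_rfl le_rfl (neg_nonpos.2 hR) (hxk.2 hp))

lemma ncard_tilesMeeting_sdiff_deepTiles_mul_le (hS : IsUniformTiling r ρ S) (hR : 0 ≤ R)
    (a b : Fin d → ℝ) :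
    (tilesMeeting d S (boxSet d a b) \ deepTiles S R a b).ncard *
      volume.real (ball (0 : Pt d) r) ≤
        volume.real (openBox a b ρ) - volume.real (openBox a b (-(R + ρ))) := by
  have hρ := hS.diam_nonneg
  simpa using hS.ncard_mul_measureReal_ball_le_sub_sum (I := {()})
    (U := fun _ => openBox a b (-(R + ρ))) (fun x hx => hx.1.1) measure_openBox_ne_top
    (fun x hx => hS.subset_openBox_of_mem_tilesMeeting hx.1) (fun _ _ => measurableSet_openBox)
    (fun _ _ => openBox_subset_openBox le_rfl le_rfl (by linarith)) (by simp)
    fun x hx _ _ => hS.disjoint_openBox_of_notMem_deepTiles hx.1.1 hx.2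

end IsUniformTiling

lemma IsLocalOperator.eq_zero_of_mem_deepTiles (hA : IsLocalOperator R S A) (hR : 0 ≤ R)
    {a' b' : Fin d → ℝ} (hdisj : Disjoint (openBox a b 0) (openBox a' b' 0)) {x y : Set (Pt d)}
    (hx : x ∈ deepTiles S R a b) (hy : y ∈ deepTiles S R a' b') : A x y = 0 := by
  refine hA.finite_range x hx.1 y hy.1 fun p hp q hq => ?_
  by_contra! hpq
  refine disjoint_left.1 hdisj (?_ : q ∈ _)
    (openBox_subset_openBox le_rfl le_rfl (neg_nonpos.2 hR) (hy.2 hq))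
  simpa using mem_openBox_of_dist_le (hx.2 hp) hpq.le

/-- Deep tiles of different boxes do not interact, so the error is at most the number of the other
tiles, which all lie near the boundary of some box. -/
lemma abs_boxCount_sub_sum_mul_le (hS : IsUniformTiling r ρ S) (hR : 0 ≤ R)
    (hA : IsLocalOperator R S A) {J : Type} {I : Finset J} {α β : J → Fin d → ℝ}
    (hα : ∀ i ∈ I, a ≤ α i) (hβ : ∀ i ∈ I, β i ≤ b)
    (hdisj : (I : Set J).PairwiseDisjoint fun i => openBox (α i) (β i) 0) :
    |boxCount lam S A a b - ∑ i ∈ I, boxCount lam S A (α i) (β i)| *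
        volume.real (ball (0 : Pt d) r) ≤
      volume.real (openBox a b ρ) - ∑ i ∈ I, volume.real (openBox (α i) (β i) (-(R + ρ))) +
        ∑ i ∈ I, (volume.real (openBox (α i) (β i) ρ) -
          volume.real (openBox (α i) (β i) (-(R + ρ)))) := by
  have hρ := hS.diam_nonneg
  have houter : (tilesMeeting d S (boxSet d a b) \ ⋃ i ∈ I, deepTiles S R (α i) (β i)).ncard *
      volume.real (ball (0 : Pt d) r) ≤
        volume.real (openBox a b ρ) - ∑ i ∈ I, volume.real (openBox (α i) (β i) (-(R + ρ))) :=
    hS.ncard_mul_measureReal_ball_le_sub_sum (fun x hx => hx.1.1) measure_openBox_ne_top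
      (fun x hx => hS.subset_openBox_of_mem_tilesMeeting hx.1) (fun i _ => measurableSet_openBox)
      (fun i hi => openBox_subset_openBox (hα i hi) (hβ i hi) (by linarith))
      (hdisj.mono_on fun i _ => openBox_subset_openBox le_rfl le_rfl (by linarith))
      fun x hx i hi => hS.disjoint_openBox_of_notMem_deepTiles hx.1.1
        fun h => hx.2 (mem_biUnion hi h)
  have hinner := Finset.sum_le_sum fun i (_ : i ∈ I) =>
    hS.ncard_tilesMeeting_sdiff_deepTiles_mul_le hR (α i) (β i)
  have hcount := abs_evCountOn_sub_sum_le (lam := lam) hA.symm hS.finite_tilesMeeting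
    (fun i _ => hS.finite_tilesMeeting) (fun x hx => hx.1) (fun i _ x hx => hx.1)
    (fun i _ => hS.deepTiles_subset_tilesMeeting hR le_rfl le_rfl)
    (fun i hi => hS.deepTiles_subset_tilesMeeting hR (hα i hi) (hβ i hi))
    (hS.pairwiseDisjoint_deepTiles hR hdisj)
    fun i hi k hk hik x hx y hy => hA.eq_zero_of_mem_deepTiles hR (hdisj hi hk hik) hx hy
  refine (mul_le_mul_of_nonneg_right hcount measureReal_nonneg).trans ?_
  rw [add_mul, Finset.sum_mul]
  exact add_le_add houter hinner

variable {W : Type*} {𝒮 : W → Set (Set (Pt d))} {𝒜 : W → Set (Pt d) → Set (Pt d) → ℝ}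

lemma exists_eventually_abs_boxCount_le (h𝒮 : ∀ i, IsUniformTiling r ρ (𝒮 i)) :
    ∃ D : ℝ, ∀ᶠ w in atTop, ∀ i a b, (∀ j, w ≤ b j - a j) →
      |boxCount lam (𝒮 i) (𝒜 i) a b| ≤ D * boxVol a b := by
  refine ⟨2 / volume.real (ball (0 : Pt d) r), ?_⟩
  filter_upwards [eventually_abs_measureReal_openBox_sub_le d ρ one_pos] with w hw i a b hab
  have hcount : boxCount lam (𝒮 i) (𝒜 i) a b ≤ (tilesMeeting d (𝒮 i) (boxSet d a b)).ncard :=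
    Nat.cast_le.2 (evCountOn_le_ncard _ _ (h𝒮 i).finite_tilesMeeting)
  have htiles := (h𝒮 i).ncard_mul_measureReal_ball_le (fun x hx => hx.1) measure_openBox_ne_top
    fun x hx => (h𝒮 i).subset_openBox_of_mem_tilesMeeting (a := a) (b := b) hx
  have hball := (h𝒮 i).measureReal_ball_pos
  rw [abs_of_nonneg (Nat.cast_nonneg _), div_mul_eq_mul_div, le_div_iff₀ hball]
  linarith [mul_le_mul_of_nonneg_right hcount hball.le, (abs_le.1 (hw a b hab)).2]

lemma almostAdditive_boxCount (h𝒮 : ∀ i, IsUniformTiling r ρ (𝒮 i)) (hR : 0 ≤ R)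
    (h𝒜 : ∀ i, IsLocalOperator R (𝒮 i) (𝒜 i)) :
    AlmostAdditive fun i => boxCount lam (𝒮 i) (𝒜 i) := by
  rcases isEmpty_or_nonempty W with hW | ⟨⟨i₀⟩⟩
  · exact fun η _ => .of_forall fun _ => .of_forall fun _ i => hW.elim i
  have hball := (h𝒮 i₀).measureReal_ball_pos
  intro η hη
  filter_upwards [eventually_gridShell_le d ρ (-(R + ρ)) (mul_pos hη hball)] with m hm
  filter_upwards [hm, eventually_gt_atTop 0] with l hshell hl i a b o hab
  have hcount := abs_boxCount_sub_sum_mul_le (lam := lam) (h𝒮 i) hR (h𝒜 i)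
    (I := gridCells a b o l) (α := gridCorner o l) (β := fun k => cubeTop (gridCorner o l k) l)
    (fun k hk => ((mem_gridCells hl).1 hk).1) (fun k hk => ((mem_gridCells hl).1 hk).2)
    fun k _ k' _ hkk' => disjoint_openBox_gridCorner hl hkk'
  refine le_of_mul_le_mul_right ((hcount.trans (hshell a b o hab)).trans_eq ?_) hball
  ring

end LocalOperator

section Translation

variable {d : ℕ} {r ρ R s u : ℝ} {S S' P : Set (Set (Pt d))} {x y : Set (Pt d)} {c t p : Pt d}
  {a b : Fin d → ℝ}

/-- The translate of a tile by `t`, so that `patTrans d t` is the image under `tileTrans t`. -/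
def tileTrans (t : Pt d) (x : Set (Pt d)) : Set (Pt d) := (fun p => p + t) '' x

/-- The patch of all tiles of `S` that meet the closed ball of radius `s` around `c`. -/
def ballPatch (S : Set (Set (Pt d))) (c : Pt d) (s : ℝ) : Set (Set (Pt d)) :=
  {x ∈ S | (x ∩ closedBall c s).Nonempty}

/-- The entries of the operators `A S`, `S ∈ Ω`, depend only on the pattern of tiles within
distance `R`, up to translation. -/
def IsTranslationInvariant (R : ℝ) (Ω : Set (Set (Set (Pt d))))
    (A : Set (Set (Pt d)) → Set (Pt d) → Set (Pt d) → ℝ) : Prop :=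
  ∀ S ∈ Ω, ∀ S' ∈ Ω, ∀ x ∈ S, ∀ y ∈ S, ∀ t : Pt d, tileTrans t x ∈ S' → tileTrans t y ∈ S' →
    patTrans d t (nbhdPattern d S x y R) = nbhdPattern d S' (tileTrans t x) (tileTrans t y) R →
    A S' (tileTrans t x) (tileTrans t y) = A S x y

lemma mem_tileTrans : p ∈ tileTrans t x ↔ p - t ∈ x := by
  simp [tileTrans, sub_eq_add_neg]

lemma tileTrans_injective (t : Pt d) : (tileTrans t).Injective :=
  image_injective.2 (add_left_injective t)

lemma mem_openBox_add_iff :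
    p ∈ openBox (a + t.ofLp) (b + t.ofLp) s ↔ p - t ∈ openBox a b s := by
  refine forall_congr' fun j => ?_
  simp only [Pi.add_apply, PiLp.sub_apply, mem_Ioo, add_right_comm, lt_sub_iff_add_lt,
    sub_lt_iff_lt_add, sub_add_eq_add_sub]

namespace IsUniformTiling

/-- The frontiers of the finitely many tiles of `P` are nowhere dense, so the interior of `x` meets
the interior of some tile of `P`. -/
lemma mem_of_subset_supp (hS : IsUniformTiling r ρ S) (hPS : P ⊆ S) (hP : P.Finite) (hx : x ∈ S)
    (hxP : x ⊆ supp d P) : x ∈ P := by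
  obtain ⟨c, hc⟩ := hS.ball_subset x hx
  have hdense : Dense (⋂ y ∈ P, (frontier y)ᶜ) :=
    dense_biInter_of_isOpen (fun y _ => isClosed_frontier.isOpen_compl) hP.countable fun y hy =>
      interior_eq_empty_iff_dense_compl.1 (interior_frontier (hS.isClosed y (hPS hy)))
  obtain ⟨z, hzc, hz⟩ := hdense.inter_open_nonempty (ball c r) isOpen_ball
    ⟨c, mem_ball_self hS.radius_pos⟩
  obtain ⟨y, hy, hzy⟩ := hxP (hc hzc)
  have hzint : z ∈ interior y := by
    by_contra hzint
    exact mem_iInter₂.1 hz y hy ((hS.isClosed y (hPS hy)).frontier_eq ▸ ⟨hzy, hzint⟩)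
  by_contra hxP
  have hxy := hS.disjoint (hPS hy) hx (ne_of_mem_of_not_mem hy hxP)
  exact hxy.subset ⟨hzint, interior_maximal hc isOpen_ball hzc⟩

lemma subset_closedBall_of_mem_ballPatch (hS : IsUniformTiling r ρ S)
    (hx : x ∈ ballPatch S c s) : x ⊆ closedBall c (s + ρ) := by
  obtain ⟨hxS, p, hp, hpc⟩ := hx
  intro q hq
  rw [mem_closedBall] at hpc ⊢
  linarith [hS.dist_le x hxS q hq p hp, dist_triangle q p c]

lemma supp_ballPatch_subset (hS : IsUniformTiling r ρ S) :
    supp d (ballPatch S c s) ⊆ closedBall c (s + ρ) :=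
  sUnion_subset fun _ hx => hS.subset_closedBall_of_mem_ballPatch hx

lemma closedBall_subset_supp_ballPatch (hS : IsUniformTiling r ρ S) :
    closedBall c s ⊆ supp d (ballPatch S c s) := by
  intro p hp
  obtain ⟨x, hx, hpx⟩ := hS.cover p
  exact ⟨x, ⟨hx, p, hpx, hp⟩, hpx⟩

lemma finite_ballPatch (hS : IsUniformTiling r ρ S) : (ballPatch S c s).Finite :=
  hS.finite_of_subset (fun _ hx => hx.1) measure_closedBall_lt_top.ne
    fun _ hx => hS.subset_closedBall_of_mem_ballPatch hx

lemma exists_tileTrans_eq (hS : IsUniformTiling r ρ S) (hS' : IsUniformTiling r ρ S')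
    (h : patTrans d t (ballPatch S c s) ⊆ S') (hx : x ∈ S') (hpx : p ∈ x)
    (hp : dist (p - t) c + ρ ≤ s) : ∃ y ∈ S, tileTrans t y = x := by
  have hxP : x ∈ patTrans d t (ballPatch S c s) := by
    refine hS'.mem_of_subset_supp h (hS.finite_ballPatch.image _) hx fun q hq => ?_
    have hqc : q - t ∈ closedBall c s := by
      have hpq := hS'.dist_le x hx q hq p hpx
      rw [← dist_sub_right q p t] at hpq
      rw [mem_closedBall]
      linarith [dist_triangle (q - t) (p - t) c]
    obtain ⟨y, hy, hqy⟩ := hS.closedBall_subset_supp_ballPatch hqc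
    exact ⟨tileTrans t y, mem_image_of_mem _ hy, mem_tileTrans.2 hqy⟩
  obtain ⟨y, hy, hyx⟩ := hxP
  exact ⟨y, hy.1, hyx⟩

lemma image_tilesMeeting_boxSet (hS : IsUniformTiling r ρ S) (hS' : IsUniformTiling r ρ S')
    (h : patTrans d t (ballPatch S c s) ⊆ S') (hab : ∀ p ∈ openBox a b 0, dist p c + ρ ≤ s) :
    tileTrans t '' tilesMeeting d S (boxSet d a b) =
      tilesMeeting d S' (boxSet d (a + t.ofLp) (b + t.ofLp)) := by
  ext x
  simp only [mem_image, mem_tilesMeeting_boxSet]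
  constructor
  · rintro ⟨y, ⟨hy, p, hpy, hp⟩, rfl⟩
    have hpc : dist p c ≤ s := by linarith [hab p hp, hS.diam_nonneg]
    exact ⟨h (mem_image_of_mem _ ⟨hy, p, hpy, hpc⟩), p + t, mem_image_of_mem _ hpy,
      mem_openBox_add_iff.2 (by simpa using hp)⟩
  · rintro ⟨hx, p, hpx, hp⟩
    rw [mem_openBox_add_iff] at hp
    obtain ⟨y, hy, rfl⟩ := hS.exists_tileTrans_eq hS' h hx hpx (hab _ hp)
    exact ⟨y, ⟨hy, p - t, mem_tileTrans.1 hpx, hp⟩, rfl⟩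

lemma patTrans_nbhdPattern (hS : IsUniformTiling r ρ S) (hS' : IsUniformTiling r ρ S')
    (h : patTrans d t (ballPatch S c s) ⊆ S') (hxy : x ∪ y ⊆ closedBall c u)
    (hu : u + R + ρ ≤ s) : patTrans d t (nbhdPattern d S x y R) =
      nbhdPattern d S' (tileTrans t x) (tileTrans t y) R := by
  have hunion : tileTrans t x ∪ tileTrans t y = tileTrans t (x ∪ y) := (image_union ..).symm
  ext z
  simp only [nbhdPattern, hunion]
  constructor
  · rintro ⟨w, ⟨hw, p, hp, q, hq, hpq⟩, rfl⟩
    have hpc : dist p c ≤ s := by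
      linarith [dist_triangle p q c, mem_closedBall.1 (hxy hq), hS.diam_nonneg]
    exact ⟨h (mem_image_of_mem _ ⟨hw, p, hp, hpc⟩), p + t, mem_image_of_mem _ hp, q + t,
      mem_image_of_mem _ hq, by simpa using hpq⟩
  · rintro ⟨hz, p, hp, q, hq, hpq⟩
    rw [mem_tileTrans] at hq
    rw [← dist_sub_right p q t] at hpq
    obtain ⟨w, hw, rfl⟩ := hS.exists_tileTrans_eq hS' h hz hp
      (by linarith [dist_triangle (p - t) (q - t) c, mem_closedBall.1 (hxy hq)])
    exact ⟨w, ⟨hw, p - t, mem_tileTrans.1 hp, q - t, hq, hpq⟩, rfl⟩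

end IsUniformTiling

lemma IsTranslationInvariant.boxCount_add {Ω : Set (Set (Set (Pt d)))}
    {A : Set (Set (Pt d)) → Set (Pt d) → Set (Pt d) → ℝ} (hA : IsTranslationInvariant R Ω A)
    (hR : 0 ≤ R) (hSΩ : S ∈ Ω) (hS'Ω : S' ∈ Ω) (hS : IsUniformTiling r ρ S)
    (hS' : IsUniformTiling r ρ S') (h : patTrans d t (ballPatch S c s) ⊆ S')
    (hab : ∀ p ∈ openBox a b 0, dist p c + 2 * ρ + R ≤ s) (lam : ℝ) :
    boxCount lam S' (A S') (a + t.ofLp) (b + t.ofLp) = boxCount lam S (A S) a b := by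
  have himage := hS.image_tilesMeeting_boxSet hS' h fun p hp => by
    linarith [hab p hp, hS.diam_nonneg]
  have hnear : ∀ x ∈ tilesMeeting d S (boxSet d a b), x ⊆ closedBall c (s - R - ρ) := by
    intro x hx q hq
    obtain ⟨hxS, p, hpx, hp⟩ := mem_tilesMeeting_boxSet.1 hx
    rw [mem_closedBall]
    linarith [hab p hp, hS.dist_le x hxS q hq p hpx, dist_triangle q p c]
  have hmem : ∀ x ∈ tilesMeeting d S (boxSet d a b), tileTrans t x ∈ S' := fun x hx =>
    (himage.subset (mem_image_of_mem _ hx)).1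
  rw [boxCount, ← himage, evCountOn_image (tileTrans_injective t).injOn, boxCount]
  exact fun x hx y hy => hA S hSΩ S' hS'Ω x hx.1 y hy.1 t (hmem x hx) (hmem y hy)
    (hS.patTrans_nbhdPattern hS' h (union_subset (hnear x hx) (hnear y hy)) (by linarith))

end Translation

section Repetitivity

variable {d : ℕ} {Ps : Set (Set (Set (Pt d)))} {M S : Set (Set (Pt d))} {r ρ R s u : ℝ}
  {rmin rmax : ℝ} {c : Pt d}

lemma IsTile.isCompact {x : Set (Pt d)} (hx : IsTile d x) : IsCompact x := by
  obtain ⟨e⟩ := hx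
  have := isCompact_iff_compactSpace.1 (isCompact_closedBall (0 : Pt d) 1)
  exact isCompact_iff_compactSpace.2 e.symm.compactSpace

lemma exists_closedBall_subset_of_lt_rIn (h : u < rIn d M) : ∃ c, closedBall c u ⊆ supp d M := by
  have hne : {u | ∃ c, closedBall c u ⊆ supp d M}.Nonempty :=
    ⟨-1, 0, by simp⟩
  obtain ⟨v, ⟨c, hc⟩, huv⟩ := exists_lt_of_lt_csSup hne h
  exact ⟨c, (closedBall_subset_closedBall huv.le).trans hc⟩

lemma exists_subset_closedBall_of_rOut_lt (hM : Bornology.IsBounded (supp d M))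
    (h : rOut d M < u) : ∃ c, supp d M ⊆ closedBall c u := by
  obtain ⟨v, hv⟩ := hM.subset_closedBall 0
  obtain ⟨v, ⟨c, hc⟩, hvu⟩ := exists_lt_of_csInf_lt (s := {u | ∃ c, supp d M ⊆ closedBall c u})
    ⟨v, 0, hv⟩ h
  exact ⟨c, hc.trans (closedBall_subset_closedBall hvu.le)⟩

lemma isUniformTiling_of_mem_tilingsOf (hrmin : 0 < rmin)
    (hPs : ∀ m, {m} ∈ Ps → rmin ≤ rIn d {m} ∧ rOut d {m} ≤ rmax) (hS : S ∈ TilingsOf d Ps) :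
    IsUniformTiling (rmin / 2) (2 * (rmax + 1)) S := by
  obtain ⟨⟨htile, hdisj, hcover⟩, hsub⟩ := hS
  have hsupp : ∀ x : Set (Pt d), supp d {x} = x := sUnion_singleton
  have hradii : ∀ x ∈ S, rmin ≤ rIn d {x} ∧ rOut d {x} ≤ rmax := fun x hx =>
    hPs x (hsub {x} ⟨finite_singleton x, singleton_nonempty x, by simpa using htile x hx, by simp⟩
      (singleton_subset_iff.2 hx))
  refine ⟨half_pos hrmin, fun p => hcover.symm.subset (mem_univ p), hdisj,
    fun x hx => (htile x hx).isCompact.isClosed, fun x hx => ?_, fun x hx p hp q hq => ?_⟩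
  · obtain ⟨c, hc⟩ :=
      exists_closedBall_subset_of_lt_rIn ((half_lt_self hrmin).trans_le (hradii x hx).1)
    exact ⟨c, ball_subset_closedBall.trans (hc.trans_eq (hsupp x))⟩
  · obtain ⟨c, hc⟩ := exists_subset_closedBall_of_rOut_lt
      ((hsupp x).symm ▸ (htile x hx).isCompact.isBounded)
      ((hradii x hx).2.trans_lt (lt_add_one rmax))
    rw [hsupp] at hc
    linarith [dist_triangle_right p q c, mem_closedBall.1 (hc hp), mem_closedBall.1 (hc hq)]

lemma dist_le_of_mem_openBox_cubeTop {o : Fin d → ℝ} {L : ℝ} (hL : 0 ≤ L) {p : Pt d}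
    (hp : p ∈ openBox o (cubeTop o L) 0) : dist p (WithLp.toLp 2 o) ≤ √d * L := by
  have hpi : dist p.ofLp o ≤ L := (dist_pi_le_iff hL).2 fun j => by
    have hj := hp j
    have hside := cubeTop_sub o L j
    rw [Real.dist_eq, abs_le]
    exact ⟨by linarith [hj.1], by linarith [hj.2]⟩
  refine ((PiLp.antilipschitzWith_ofLp 2 _).le_mul_dist p _).trans ?_
  simpa [Real.sqrt_eq_rpow] using mul_le_mul_of_nonneg_left hpi (Real.sqrt_nonneg d)

lemma le_of_closedBall_subset_closedBall [NeZero d] {c' : Pt d} (hu : 0 ≤ u)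
    (h : closedBall c s ⊆ closedBall c' u) : s ≤ u := by
  rcases le_total s 0 with hs | hs
  · exact hs.trans hu
  · have hdiam := diam_mono h isBounded_closedBall
    rw [diam_closedBall_eq c hs, diam_closedBall_eq c' hu] at hdiam
    linarith

lemma le_rIn [NeZero d] (hM : Bornology.IsBounded (supp d M)) (h : closedBall c s ⊆ supp d M) :
    s ≤ rIn d M := by
  obtain ⟨u, hu, hMu⟩ := hM.subset_closedBall_lt 0 0
  exact le_csSup ⟨u, fun v ⟨_, hv⟩ => le_of_closedBall_subset_closedBall hu.le (hv.trans hMu)⟩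
    ⟨c, h⟩

lemma nonneg_of_subset_closedBall {X : Set (Pt d)} (hX : X.Nonempty) (h : X ⊆ closedBall c u) :
    0 ≤ u :=
  nonempty_closedBall.1 (hX.mono h)

lemma le_rOut [NeZero d] (hM : Bornology.IsBounded (supp d M)) (hne : (supp d M).Nonempty)
    (h : closedBall c s ⊆ supp d M) : s ≤ rOut d M := by
  obtain ⟨u, hu⟩ := hM.subset_closedBall 0
  exact le_csInf ⟨u, 0, hu⟩ fun v ⟨_, hv⟩ =>
    le_of_closedBall_subset_closedBall (nonneg_of_subset_closedBall hne hv) (h.trans hv)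

lemma rOut_le (hne : (supp d M).Nonempty) (h : supp d M ⊆ closedBall c u) : rOut d M ≤ u :=
  csInf_le ⟨0, fun _ ⟨_, hv⟩ => nonneg_of_subset_closedBall hne hv⟩ ⟨c, h⟩

namespace IsUniformTiling

lemma nonempty_supp_ballPatch (hS : IsUniformTiling r ρ S) (hs : 0 ≤ s) :
    (supp d (ballPatch S c s)).Nonempty :=
  ⟨c, hS.closedBall_subset_supp_ballPatch (mem_closedBall_self hs)⟩

lemma isBounded_supp_ballPatch (hS : IsUniformTiling r ρ S) :
    Bornology.IsBounded (supp d (ballPatch S c s)) :=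
  isBounded_closedBall.subset hS.supp_ballPatch_subset

lemma ballPatch_mem (hS : IsUniformTiling r ρ S) (hSPs : S ∈ TilingsOf d Ps) (hs : 0 ≤ s) :
    ballPatch S c s ∈ Ps := by
  obtain ⟨-, x, hx, -⟩ := hS.nonempty_supp_ballPatch (c := c) hs
  exact hSPs.2 _ ⟨hS.finite_ballPatch, ⟨x, hx⟩, fun y hy => hSPs.1.1 y hy.1,
    hS.disjoint.mono fun y hy => hy.1⟩ fun y hy => hy.1

end IsUniformTiling

lemma LinearlyRepetitive.exists_patTrans_ballPatch_subset [NeZero d]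
    (hPs : LinearlyRepetitive d Ps) (h𝒮 : ∀ S ∈ TilingsOf d Ps, IsUniformTiling r ρ S) :
    ∃ κ > 0, ∀ S ∈ TilingsOf d Ps, ∀ S' ∈ TilingsOf d Ps, ∀ c c' s, 1 ≤ s →
      ∃ t, patTrans d t (ballPatch S c s) ⊆ S' ∧ dist (c + t) c' ≤ κ * (s + ρ) + ρ := by
  obtain ⟨κ, hκ, hrep⟩ := hPs
  refine ⟨κ, hκ, fun S hSPs S' hSPs' c c' s hs => ?_⟩
  have hS := h𝒮 S hSPs
  have hS' := h𝒮 S' hSPs'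
  have hs0 : 0 ≤ s := zero_le_one.trans hs
  have hne := hS.nonempty_supp_ballPatch (c := c) hs0
  have hρ := hS.diam_nonneg
  have hout : 1 ≤ rOut d (ballPatch S c s) :=
    hs.trans (le_rOut hS.isBounded_supp_ballPatch hne hS.closedBall_subset_supp_ballPatch)
  have hin : κ * rOut d (ballPatch S c s) ≤ rIn d (ballPatch S' c' (κ * (s + ρ))) :=
    (mul_le_mul_of_nonneg_left (rOut_le hne hS.supp_ballPatch_subset) hκ.le).trans
      (le_rIn hS'.isBounded_supp_ballPatch hS'.closedBall_subset_supp_ballPatch)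
  obtain ⟨t, ht⟩ := hrep _ (hS.ballPatch_mem hSPs hs0) hout _
    (hS'.ballPatch_mem hSPs' (by positivity)) hin
  refine ⟨t, fun x hx => (ht hx).1, ?_⟩
  obtain ⟨x, hx, hcx⟩ := hS.closedBall_subset_supp_ballPatch (mem_closedBall_self hs0)
  exact mem_closedBall.1 (hS'.subset_closedBall_of_mem_ballPatch (ht (mem_image_of_mem _ hx))
    (mem_image_of_mem _ hcx))

lemma LinearlyRepetitive.isLinearlyRecurrent_boxCount [NeZero d] (hPs : LinearlyRepetitive d Ps)
    (h𝒮 : ∀ S ∈ TilingsOf d Ps, IsUniformTiling r ρ S) (hR : 0 ≤ R)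
    {A : Set (Set (Pt d)) → Set (Pt d) → Set (Pt d) → ℝ}
    (hA : IsTranslationInvariant R (TilingsOf d Ps) A) (lam : ℝ) :
    IsLinearlyRecurrent fun S : TilingsOf d Ps => boxCount lam S.1 (A S.1) := by
  obtain ⟨κ, hκ, hrep⟩ := hPs.exists_patTrans_ballPatch_subset h𝒮
  set H := κ * (√d + 2) + 1 with hH
  have hHpos : 0 < H := by positivity
  refine ⟨2 * H + 1, by linarith, ?_⟩
  filter_upwards [eventually_ge_atTop 1, eventually_ge_atTop (2 * ρ + R)] with L hL1 hLρ S o S' a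
  have hsqrt : 0 ≤ √d * L := by positivity
  obtain ⟨t, ht, hdist⟩ := hrep S S.2 S' S'.2 (WithLp.toLp 2 o)
    (WithLp.toLp 2 fun j => a j + H * L) (√d * L + L) (by linarith)
  have hHL : κ * (√d * L + L + ρ) + ρ ≤ H * L := by
    have := mul_le_mul_of_nonneg_left (show ρ ≤ L by linarith [(h𝒮 S S.2).diam_nonneg]) hκ.le
    rw [hH]
    linarith
  have hcoord : ∀ j, |o j + t j - (a j + H * L)| ≤ H * L := fun j => by
    simpa [Real.dist_eq] using (PiLp.dist_apply_le _ _ j).trans (hdist.trans hHL)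
  have hcount := hA.boxCount_add hR S.2 S'.2 (h𝒮 S S.2) (h𝒮 S' S'.2) ht (a := o)
    (b := cubeTop o L) (fun p hp => by
      linarith [dist_le_of_mem_openBox_cubeTop (zero_le_one.trans hL1) hp]) lam
  have htop : cubeTop o L + t.ofLp = cubeTop (o + t.ofLp) L := by
    ext j
    simp only [cubeTop, Pi.add_apply]
    ring
  refine ⟨o + t.ofLp, fun j => ?_, fun j => ?_, htop ▸ hcount⟩
  · linarith [(abs_le.1 (hcoord j)).1, Pi.add_apply o t.ofLp j]
  · simp only [cubeTop, Pi.add_apply]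
    linarith [(abs_le.1 (hcoord j)).2]

end Repetitivity

theorem ids_exists_general {d : ℕ} {Ps : Set (Set (Set (Pt d)))} {rmin rmax R : ℝ}
    (hrmin : 0 < rmin) (hPs : ∀ m, {m} ∈ Ps → rmin ≤ rIn d {m} ∧ rOut d {m} ≤ rmax)
    (hlr : LinearlyRepetitive d Ps) (hR : 0 ≤ R)
    {A : Set (Set (Pt d)) → Set (Pt d) → Set (Pt d) → ℝ}
    (hlocal : ∀ S ∈ TilingsOf d Ps, IsLocalOperator R S (A S))
    (hinv : IsTranslationInvariant R (TilingsOf d Ps) A) (lam : ℝ) :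
    ∃ k : ℝ, ∀ ε > 0, ∃ r' > 0, ∀ S ∈ TilingsOf d Ps, ∀ B, IsBox d B → r' ≤ widthOf d B →
      |idsVal d S A B lam - k| < ε := by
  obtain rfl | hd := eq_zero_or_neZero d
  · -- the width of a box in `ℝ^0` is an infimum over the empty set, hence `0`
    exact ⟨0, fun ε _ => ⟨1, one_pos, fun S _ B _ hB => by norm_num [widthOf] at hB⟩⟩
  have htiling := fun S => isUniformTiling_of_mem_tilingsOf (S := S) hrmin hPs
  obtain ⟨D, hD⟩ := exists_eventually_abs_boxCount_le (lam := lam)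
    (𝒮 := fun S : TilingsOf d Ps => S.1) (𝒜 := fun S => A S.1) fun S => htiling S S.2
  obtain ⟨k, hk⟩ := exists_mean_of_isLinearlyRecurrent
    (almostAdditive_boxCount (fun S : TilingsOf d Ps => htiling S S.2) hR fun S => hlocal S S.2)
    (hlr.isLinearlyRecurrent_boxCount htiling hR hinv lam) hD
  refine ⟨k, fun ε hε => ?_⟩
  obtain ⟨r', hr', hpos⟩ := ((hk (ε / 2) (half_pos hε)).and (eventually_gt_atTop 0)).exists
  refine ⟨r', hpos, ?_⟩
  rintro S hS _ ⟨a, b, hab, rfl⟩ hwidth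
  have hle := fun j => (hab j).le
  have hcount := hr' ⟨S, hS⟩ a b fun j => hwidth.trans (widthOf_boxSet_le hle j)
  have hvol : 0 < boxVol a b := Finset.prod_pos fun j _ => sub_pos.2 (hab j)
  rw [idsVal_eq_evCountOn_div, volOf_boxSet hle, div_sub' hvol.ne', abs_div, abs_of_pos hvol,
    div_lt_iff₀ hvol, mul_comm _ k]
  exact hcount.trans_lt (mul_lt_mul_of_pos_right (half_lt_self hε) hvol)

/-- Theorem 5.1, existence of the integrated density of states.
Let `T` be a linearly repetitive tiling and `A` a symmetric finite-range
translation-invariant operator family on the tilings of `Ω(𝒫(T))`.  Then for every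
`λ ∈ ℝ` the eigenvalue counting functions `k_λ^S(B)` converge as `ω(B) → ∞`, uniformly
in `S ∈ Ω(𝒫(T))`, to a limit `k(λ)` independent of `S`. -/
theorem ids_exists (d : ℕ) (T : Set (Set (Pt d))) (hT : IsTiling d T)
    (hadm : Admissible d (patternClassesOf d T))
    (hlr : LinearlyRepetitive d (patternClassesOf d T))
    (R : ℝ) (hR : 0 ≤ R)
    (A : Set (Set (Pt d)) → Set (Pt d) → Set (Pt d) → ℝ)
    (hsym : ∀ S ∈ TilingsOf d (patternClassesOf d T), ∀ x ∈ S, ∀ y ∈ S,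
      A S x y = A S y x)
    (hfin : ∀ S ∈ TilingsOf d (patternClassesOf d T), ∀ x ∈ S, ∀ y ∈ S,
      (∀ p ∈ x, ∀ q ∈ y, R ≤ dist p q) → A S x y = 0)
    (hinv : ∀ S ∈ TilingsOf d (patternClassesOf d T),
      ∀ S' ∈ TilingsOf d (patternClassesOf d T), ∀ x ∈ S, ∀ y ∈ S, ∀ t : Pt d,
      ((fun p => p + t) '' x) ∈ S' → ((fun p => p + t) '' y) ∈ S' →
      patTrans d t (nbhdPattern d S x y R) =
        nbhdPattern d S' ((fun p => p + t) '' x) ((fun p => p + t) '' y) R →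
      A S' ((fun p => p + t) '' x) ((fun p => p + t) '' y) = A S x y) :
    ∀ lam : ℝ, ∃ k : ℝ, ∀ ε : ℝ, 0 < ε → ∃ r' : ℝ, 0 < r' ∧
      ∀ S ∈ TilingsOf d (patternClassesOf d T), ∀ B : Set (Pt d),
        IsBox d B → r' ≤ widthOf d B → |idsVal d S A B lam - k| < ε := by
  intro lam
  obtain ⟨rmin, rmax, hrmin, -, hbounds⟩ := hadm.tileBounds
  exact ids_exists_general hrmin (fun m hm => ⟨(hbounds m hm).1, (hbounds m hm).2.2⟩) hlr hR
    (fun S hS => ⟨hsym S hS, hfin S hS⟩) hinv lam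

end
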